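/- arXiv:1507.07977 — 4 statements merged into one kernel-verified Lean document; each statement's English description precedes it below -/
import Mathlib

section
/- Let m, h, k be integers with 1 ≤ h < k, gcd(h,k) = 1 and 0 ≤ m < k, and let (β₀,γ₀) be any pair in Z(h,k) with |β₀γ₀| minimal (i.e. |β₀γ₀| ≤ |βγ| for all (β,γ) ∈ Z(h,k)). Then | (1/k)·log|∏^{-1}(h/k)_m| − Cl₂(2π m γ₀/k)/(2π|β₀γ₀|) | ≤ (16.05 + (√2/π)·log k)/√k. -/
/-!
The points `(n, s)` with `n h ≡ s (mod k)` form a lattice of covolume `k`. By Dirichlet's theorem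
it contains a primitive vector `(q, r)`, `r = q h - j k`, with `1 ≤ q ≤ √k` and `0 < |r| ≤ √k`
(`exists_short_vector`). The estimate is proved for `(q, |r|)` first (`main_estimate`) and then
transferred to `(β₀, γ₀)`.

*Reduction to a lattice sum.* The Fourier series `-log |2 sin x| = ∑ cos (2nx) / n`, truncated at
`n < k`, has error at most `1 / (k |sin x|)` (`log_two_sin_trunc`); over the points `x = π i h / k`
these errors add up to at most the harmonic number `H` of `k`. Exchanging the sums gives
`∑_{n < k} C n / n`, where `C n = ∑_{i ≤ m} cos (2π i s n / k)` is a Dirichlet kernel and `s n` is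
the residue of `n h` of least absolute value, so that `|C n| ≤ 1/2 + k / (4 |s n|)`.

*Points off the line through `(q, r)`.* The integer `t = n j - a q`, where `n h = s + a k`, indexes
the lines parallel to `(q, r)` and satisfies `t k = q s - n r`. If `t ≠ 0`, then
`|t| k ≤ q |s| + n |r|`, hence `1 / (n |s|) ≤ (q / (n |t|) + |r| / (|s| |t|)) / k`. On each line the
points are spaced by `(q, r)`, so such sums are controlled by `block_sum_le`; the total is at most
`(9 √k + 6 H²) / k` (`off_line_sum`).

*Points on the line.* These are the multiples `(l q, l r)`. Replacing `C n` by
`sin (2 m x) / (2 x)`, `x = π s n / k`, costs at most `3/2` each (`abs_dirichlet_kernel_sub_le`), and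
what remains is a partial sum of `k Cl₂(2π m |r| / k) / (2π q |r|)` containing all `l` up to
about `√k / 2`.

*Transfer.* If `(β₀, γ₀)` is on the line through `(q, r)`, minimality forces `(|β₀|, γ₀) = (q, |r|)`
and the two Clausen terms agree. Otherwise `k ≤ q γ₀ + |β₀| |r|` gives `|β₀| + γ₀ ≥ √k`, so both
`|β₀ γ₀|` and `q |r| ≥ |β₀ γ₀|` are at least `√k / 2`, and both Clausen terms are `O(1/√k)` because
`|Cl₂| ≤ 2`.
-/


open scoped Real

/-- The sine product `∏(θ)_m = ∏_{j=1}^m 2 sin(πjθ)`. -/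
noncomputable def sineProd (θ : ℝ) (m : ℕ) : ℝ :=
  ∏ j ∈ Finset.Icc 1 m, 2 * Real.sin (π * j * θ)

/-- Clausen's function `Cl₂(θ) = Σ_{n≥1} sin(nθ)/n²`. -/
noncomputable def Cl2 (θ : ℝ) : ℝ := ∑' n : ℕ, Real.sin (n * θ) / (n : ℝ) ^ 2

/-- Membership in `Z(h,k) = {(β,γ) : 1 ≤ |β| < k, 1 ≤ γ < k, βh ≡ γ (mod k)}`. -/
def Zhk (h k : ℕ) (p : ℤ × ℤ) : Prop :=
  1 ≤ |p.1| ∧ |p.1| < (k : ℤ) ∧ 1 ≤ p.2 ∧ p.2 < (k : ℤ) ∧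
    p.1 * (h : ℤ) ≡ p.2 [ZMOD (k : ℤ)]

/-! ### Fourier series of `log |2 sin|` and Dirichlet kernels -/

lemma norm_one_sub_exp (θ : ℝ) :
    ‖1 - Complex.exp ((2 * θ : ℝ) * Complex.I)‖ = 2 * |Real.sin θ| := by
  have h : 1 - Complex.exp ((2 * θ : ℝ) * Complex.I)
      = Complex.exp ((θ : ℝ) * Complex.I) * ((-2 * Real.sin θ : ℝ) * Complex.I) := by
    have e : ((2 * θ : ℝ) * Complex.I : ℂ) = θ * Complex.I + θ * Complex.I := by
      push_cast; ring
    rw [e, Complex.exp_add, Complex.exp_mul_I]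
    push_cast
    linear_combination (1 : ℂ) * (- Complex.sin_sq_add_cos_sq (θ : ℂ)) +
      (Complex.sin θ) ^ 2 * Complex.I_sq
  rw [h, norm_mul, Complex.norm_exp_ofReal_mul_I, norm_mul, Complex.norm_I, Complex.norm_real,
    Real.norm_eq_abs, abs_mul]
  norm_num

/-- The truncated Fourier series of `-log |2 sin θ|`. The remainder is the real part of
`∫₀¹ z (tz)^M / (1 - tz) dt` with `z = exp (2iθ)`, and `|1 - tz| ≥ |1 - z| / 2 = |sin θ|`. -/
lemma log_two_sin_trunc (θ : ℝ) (hθ : Real.sin θ ≠ 0) (M : ℕ) :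
    |-Real.log (2 * Real.sin θ) - ∑ n ∈ Finset.Icc 1 M, Real.cos (2 * n * θ) / n|
      ≤ 1 / ((M + 1) * |Real.sin θ|) := by
  set z : ℂ := Complex.exp ((2 * θ : ℝ) * Complex.I) with hz
  have hz1 : ‖z‖ = 1 := Complex.norm_exp_ofReal_mul_I _
  have hz2 : ‖1 - z‖ = 2 * |Real.sin θ| := norm_one_sub_exp θ
  have hs : 0 < |Real.sin θ| := abs_pos.mpr hθ
  have hzne : z ≠ 1 := by
    intro h; rw [h] at hz2; simp at hz2; exact hθ hz2
  have hre : z.re < 1 := by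
    have h1 : z.re ≤ 1 := hz1 ▸ Complex.re_le_norm z
    refine lt_of_le_of_ne h1 fun h => hzne ?_
    have h2 : z.re ^ 2 + z.im ^ 2 = 1 := by
      have := Complex.sq_norm z
      rw [hz1, Complex.normSq_apply] at this
      nlinarith
    have h3 : z.im = 0 := by rw [h] at h2; nlinarith
    exact Complex.ext (by simpa using h) (by simpa using h3)
  -- the segment from `1` to `1 - z` stays in the slit plane
  have hslit : ∀ t ∈ Set.Icc (0 : ℝ) 1, 1 - (t : ℂ) * z ∈ Complex.slitPlane := by
    intro t ht
    left
    simp only [Complex.sub_re, Complex.one_re, Complex.re_ofReal_mul]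
    nlinarith [ht.1, ht.2, mul_nonneg ht.1 (sub_nonneg.mpr hre.le)]
  -- `|1 - z| ≤ |1 - tz| + (1 - t) ≤ 2 |1 - tz|`
  have hlow : ∀ t ∈ Set.Icc (0 : ℝ) 1, |Real.sin θ| ≤ ‖1 - (t : ℂ) * z‖ := by
    intro t ht
    have h1 : ‖1 - z‖ ≤ ‖1 - (t : ℂ) * z‖ + (1 - t) := by
      have : 1 - z = (1 - (t : ℂ) * z) + ((t - 1 : ℝ) : ℂ) * z := by push_cast; ring
      rw [this]
      refine (norm_add_le _ _).trans ?_
      rw [norm_mul, hz1, Complex.norm_real, Real.norm_eq_abs, abs_of_nonpos (by linarith [ht.2])]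
      linarith
    have h2 : 1 - t ≤ ‖1 - (t : ℂ) * z‖ := by
      have := norm_sub_norm_le (1 : ℂ) ((t : ℂ) * z)
      rw [norm_mul, hz1, Complex.norm_real, Real.norm_eq_abs, abs_of_nonneg ht.1] at this
      simpa using this
    linarith
  set f : ℝ → ℂ := fun t => -Complex.log (1 - (t : ℂ) * z)
    - ∑ n ∈ Finset.range M, ((t : ℂ) * z) ^ (n + 1) / ((n : ℂ) + 1) with hf
  have hderiv : ∀ t ∈ Set.Icc (0 : ℝ) 1,
      HasDerivAt f (z * ((t : ℂ) * z) ^ M / (1 - (t : ℂ) * z)) t := by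
    intro t ht
    have hlin : HasDerivAt (fun t : ℝ => (t : ℂ) * z) z t := by
      simpa using (Complex.ofRealCLM.hasDerivAt (x := t)).mul_const z
    have hne : 1 - (t : ℂ) * z ≠ 0 := Complex.slitPlane_ne_zero (hslit t ht)
    have h1 : HasDerivAt (fun t : ℝ => Complex.log (1 - (t : ℂ) * z))
        (-z / (1 - (t : ℂ) * z)) t := (hlin.const_sub 1).clog_real (hslit t ht)
    have h2 : HasDerivAt
        (fun t : ℝ => ∑ n ∈ Finset.range M, ((t : ℂ) * z) ^ (n + 1) / ((n : ℂ) + 1))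
        (∑ n ∈ Finset.range M, ((t : ℂ) * z) ^ n * z) t := by
      refine HasDerivAt.fun_sum fun n _ => ?_
      have h3 := (hlin.pow (n + 1)).div_const ((n : ℂ) + 1)
      have hn : (n : ℂ) + 1 ≠ 0 := Nat.cast_add_one_ne_zero n
      refine h3.congr_deriv ?_
      rw [Nat.add_sub_cancel]
      push_cast
      field_simp
    refine (h1.neg.sub h2).congr_deriv ?_
    rw [← Finset.sum_mul]
    have hg := mul_neg_geom_sum ((t : ℂ) * z) M
    rw [neg_div, neg_neg, sub_eq_iff_eq_add, div_eq_iff hne, add_mul,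
      div_mul_cancel₀ _ hne]
    linear_combination -z * hg
  have hB : ∀ t : ℝ, HasDerivAt (fun t : ℝ => t ^ (M + 1) / ((M + 1) * |Real.sin θ|))
      (t ^ M / |Real.sin θ|) t := by
    intro t
    have := (hasDerivAt_pow (M + 1) t).div_const ((M + 1) * |Real.sin θ|)
    refine this.congr_deriv ?_
    rw [Nat.add_sub_cancel]
    push_cast
    have : (M : ℝ) + 1 ≠ 0 := Nat.cast_add_one_ne_zero M
    field_simp
  have key := image_norm_le_of_norm_deriv_right_le_deriv_boundary (f := f) (a := 0) (b := 1)
    (f' := fun t => z * ((t : ℂ) * z) ^ M / (1 - (t : ℂ) * z))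
    (fun t ht => (hderiv t ht).continuousAt.continuousWithinAt)
    (fun t ht => (hderiv t (Set.Ico_subset_Icc_self ht)).hasDerivWithinAt)
    (B := fun t : ℝ => t ^ (M + 1) / ((M + 1) * |Real.sin θ|)) (B' := fun t => t ^ M / |Real.sin θ|)
    (by simp [hf]) hB (fun t ht => by
      rw [norm_div, norm_mul, norm_pow, norm_mul, hz1, Complex.norm_real, Real.norm_eq_abs,
        abs_of_nonneg ht.1, mul_one, one_mul]
      exact div_le_div_of_nonneg_left (pow_nonneg ht.1 _) hs
        (hlow t (Set.Ico_subset_Icc_self ht)))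
    (Set.right_mem_Icc.mpr zero_le_one)
  have hfre : (f 1).re
      = -Real.log (2 * Real.sin θ) - ∑ n ∈ Finset.Icc 1 M, Real.cos (2 * n * θ) / n := by
    simp only [hf, Complex.ofReal_one, one_mul, Complex.sub_re, Complex.neg_re, Complex.log_re,
      Complex.re_sum, hz2]
    congr 1
    · rw [← Real.log_abs (2 * Real.sin θ), abs_mul, abs_two]
    · have himg : Finset.Icc 1 M = (Finset.range M).image (fun n => n + 1) := by
        ext n
        simp only [Finset.mem_Icc, Finset.mem_image, Finset.mem_range]
        exact ⟨fun hn => ⟨n - 1, by omega, by omega⟩, by rintro ⟨a, ha, rfl⟩; omega⟩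
      rw [himg, Finset.sum_image (by simp)]
      refine Finset.sum_congr rfl fun n _ => ?_
      rw [hz, ← Complex.exp_nat_mul]
      have e : ((n + 1 : ℕ) : ℂ) * ((2 * θ : ℝ) * Complex.I)
          = ((2 * (n + 1 : ℕ) * θ : ℝ) : ℂ) * Complex.I := by push_cast; ring
      have e2 : ((n : ℂ) + 1) = (((n + 1 : ℕ) : ℝ) : ℂ) := by push_cast; ring
      rw [e, e2, Complex.div_ofReal_re, Complex.exp_ofReal_mul_I_re]
  rw [← hfre]
  refine (Complex.abs_re_le_norm _).trans (key.trans ?_)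
  simp

lemma dirichlet_kernel (x : ℝ) (hx : Real.sin x ≠ 0) (m : ℕ) :
    ∑ j ∈ Finset.Icc 1 m, Real.cos (2 * j * x)
      = Real.sin ((2 * m + 1) * x) / (2 * Real.sin x) - 1 / 2 := by
  induction m with
  | zero => simp; field_simp; simp
  | succ n ih =>
    rw [Finset.sum_Icc_succ_top (by omega), ih]
    push_cast
    have e1 : (2 * ((n : ℝ) + 1) + 1) * x = 2 * (n + 1) * x + x := by ring
    have e2 : (2 * (n : ℝ) + 1) * x = 2 * (n + 1) * x - x := by ring
    rw [e1, e2, Real.sin_add, Real.sin_sub]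
    field_simp
    ring

lemma abs_dirichlet_kernel_le (x : ℝ) (hx : Real.sin x ≠ 0) (m : ℕ) :
    |∑ j ∈ Finset.Icc 1 m, Real.cos (2 * j * x)| ≤ 1 / (2 * |Real.sin x|) + 1 / 2 := by
  rw [dirichlet_kernel x hx]
  refine (abs_sub _ _).trans ?_
  rw [abs_div, abs_mul, abs_two, abs_of_pos (by norm_num : (0 : ℝ) < 1 / 2)]
  gcongr
  exact Real.abs_sin_le_one _

/-- For `|x| ≤ π/2`, the Dirichlet kernel is within `3/2` of the corresponding integral
`∫₀^m cos (2ux) du`. -/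
lemma abs_dirichlet_kernel_sub_le (x : ℝ) (hx : x ≠ 0) (hx2 : |x| ≤ π / 2) (m : ℕ) :
    |∑ j ∈ Finset.Icc 1 m, Real.cos (2 * j * x) - Real.sin (2 * m * x) / (2 * x)| ≤ 3 / 2 := by
  wlog h0 : 0 < x generalizing x
  · have h := this (-x) (neg_ne_zero.mpr hx) (by rwa [abs_neg])
      (by have := lt_of_le_of_ne (not_lt.mp h0) hx; linarith)
    simpa [Real.cos_neg, Real.sin_neg, neg_div_neg_eq] using h
  rw [abs_of_pos h0] at hx2
  have hs : 0 < Real.sin x := Real.sin_pos_of_pos_of_lt_pi h0 (by linarith [Real.pi_pos])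
  have hc : 0 ≤ Real.cos x := Real.cos_nonneg_of_mem_Icc ⟨by linarith, hx2⟩
  have hsx : Real.sin x ≤ x := Real.sin_le h0.le
  -- `0 ≤ 1/x - cot x ≤ 1` on `(0, π/2]`
  have hu : 0 ≤ Real.sin x - x * Real.cos x := by
    rcases hx2.lt_or_eq with h | h
    · have h1 := Real.le_tan h0.le h
      have hc' : 0 < Real.cos x := Real.cos_pos_of_mem_Ioo ⟨by linarith, h⟩
      rw [Real.tan_eq_sin_div_cos, le_div_iff₀ hc'] at h1
      linarith
    · rw [h]; simp
  have hv : Real.sin x - x * Real.cos x ≤ x * Real.sin x := by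
    have : 1 ≤ Real.sin x + Real.cos x := by
      nlinarith [Real.sin_sq_add_cos_sq x, mul_nonneg hs.le hc]
    nlinarith
  rw [dirichlet_kernel x hs.ne']
  have e : Real.sin ((2 * m + 1) * x) / (2 * Real.sin x) - 1 / 2 - Real.sin (2 * m * x) / (2 * x)
      = -(Real.sin (2 * m * x) * ((Real.sin x - x * Real.cos x) / (x * Real.sin x))) / 2
        + (Real.cos (2 * m * x) - 1) / 2 := by
    rw [show (2 * (m : ℝ) + 1) * x = 2 * m * x + x by ring, Real.sin_add]
    field_simp
    ring
  rw [e]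
  set w := (Real.sin x - x * Real.cos x) / (x * Real.sin x)
  have hw0 : 0 ≤ w := div_nonneg hu (by positivity)
  have hw1 : w ≤ 1 := by
    rw [div_le_one (by positivity)]; exact hv
  have hp : |Real.sin (2 * m * x) * w| ≤ 1 := by
    rw [abs_mul, abs_of_nonneg hw0]
    exact mul_le_one₀ (Real.abs_sin_le_one _) hw0 hw1
  have := abs_le.mp hp
  have h1 := Real.cos_le_one (2 * m * x)
  have h2 := Real.neg_one_le_cos (2 * m * x)
  rw [abs_le]
  constructor <;> linarith [this.1, this.2]

/-- Jordan's inequality at the angle `π s / k`, for `|s| ≤ k / 2`. -/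
lemma le_abs_sin_int (s : ℤ) (k : ℕ) (hk : 0 < k) (hs : 2 * |s| ≤ k) :
    2 * |(s : ℝ)| / k ≤ |Real.sin (π * s / k)| := by
  have hk' : (0 : ℝ) < k := by exact_mod_cast hk
  have hs' : 2 * |(s : ℝ)| ≤ k := by exact_mod_cast hs
  have h : |Real.sin (π * s / k)| = Real.sin (π * |(s : ℝ)| / k) := by
    have h0 : 0 ≤ Real.sin (π * |(s : ℝ)| / k) := by
      apply Real.sin_nonneg_of_nonneg_of_le_pi
      · positivity
      · rw [div_le_iff₀ hk']
        nlinarith [Real.pi_pos, abs_nonneg (s : ℝ)]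
    rcases abs_cases (s : ℝ) with ⟨h, _⟩ | ⟨h, _⟩
    · rw [h] at h0 ⊢; exact abs_of_nonneg h0
    · rw [h] at h0 ⊢
      rw [mul_neg, neg_div, Real.sin_neg] at h0 ⊢
      exact abs_of_nonpos (by linarith)
  rw [h]
  have := Real.mul_le_sin (x := π * |(s : ℝ)| / k) (by positivity) (by
    rw [div_le_div_iff₀ hk' two_pos]
    nlinarith [Real.pi_pos, abs_nonneg (s : ℝ)])
  refine le_trans (le_of_eq ?_) this
  field_simp

/-! ### Harmonic sums over distinct integers -/

/-- The harmonic number `1 + 1/2 + ⋯ + 1/k`, as a real number. -/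
noncomputable def harm (k : ℕ) : ℝ := ∑ i ∈ Finset.Icc 1 k, (i : ℝ)⁻¹

lemma harm_nonneg (k : ℕ) : 0 ≤ harm k := Finset.sum_nonneg fun i _ => by positivity

lemma harm_le (k : ℕ) : harm k ≤ 1 + Real.log k := by
  have := harmonic_le_one_add_log k
  rw [harmonic_eq_sum_Icc] at this
  push_cast at this
  exact this

lemma sum_inv_sq_le (k : ℕ) : ∑ i ∈ Finset.Icc 1 k, ((i : ℝ) ^ 2)⁻¹ ≤ 2 := by
  have h := sum_Ioo_inv_sq_le (α := ℝ) 0 (k + 1)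
  have e : Finset.Ioo 0 (k + 1) = Finset.Icc 1 k := by
    ext; simp only [Finset.mem_Ioo, Finset.mem_Icc]; omega
  rw [e] at h
  simpa using h

lemma sum_comp_le_of_injOn {ι κ : Type*} [DecidableEq κ] (S : Finset ι) (T : Finset κ) (e : ι → κ)
    (he : ∀ i ∈ S, e i ∈ T) (hinj : Set.InjOn e S) (F : κ → ℝ) (hF : ∀ y, 0 ≤ F y) :
    ∑ i ∈ S, F (e i) ≤ ∑ y ∈ T, F y := by
  rw [← Finset.sum_image (f := F) hinj]
  exact Finset.sum_le_sum_of_subset_of_nonneg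
    (Finset.image_subset_iff.mpr he) (fun y _ _ => hF y)

lemma int_eq_of_natAbs_sign {a b : ℤ} (h : a.natAbs = b.natAbs)
    (h' : decide (0 < a) = decide (0 < b)) : a = b := by
  rw [decide_eq_decide] at h'
  omega

/-- Distinct nonzero integers in `[-k, k]` take each absolute value at most twice. -/
lemma sum_natAbs_le {ι : Type*} (S : Finset ι) (t : ι → ℤ) (k : ℕ) (ht0 : ∀ i ∈ S, t i ≠ 0)
    (htk : ∀ i ∈ S, (t i).natAbs ≤ k) (hinj : Set.InjOn t S) (F : ℕ → ℝ) (hF : ∀ n, 0 ≤ F n) :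
    ∑ i ∈ S, F (t i).natAbs ≤ 2 * ∑ n ∈ Finset.Icc 1 k, F n := by
  have h := sum_comp_le_of_injOn S (Finset.Icc 1 k ×ˢ (Finset.univ : Finset Bool))
    (fun i => ((t i).natAbs, decide (0 < t i)))
    (fun i hi => by
      have := ht0 i hi
      have := htk i hi
      simp only [Finset.mem_product, Finset.mem_Icc, Finset.mem_univ, and_true]
      omega)
    (fun i hi i' hi' h => by
      simp only [Prod.mk.injEq] at h
      exact hinj hi hi' (int_eq_of_natAbs_sign h.1 h.2))
    (fun p => F p.1) (fun p => hF p.1)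
  refine h.trans (le_of_eq ?_)
  rw [Finset.sum_product, Finset.mul_sum]
  simp [two_mul]

lemma sum_inv_abs_le {ι : Type*} (S : Finset ι) (t : ι → ℤ) (k : ℕ) (ht0 : ∀ i ∈ S, t i ≠ 0)
    (htk : ∀ i ∈ S, (t i).natAbs ≤ k) (hinj : Set.InjOn t S) :
    ∑ i ∈ S, |(t i : ℝ)|⁻¹ ≤ 2 * harm k := by
  have := sum_natAbs_le S t k ht0 htk hinj (fun n => (n : ℝ)⁻¹) (fun n => by positivity)
  simpa [Nat.cast_natAbs, harm] using this

/-- The weighted count behind the off-line estimate: the points with `x < q` are handled by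
`uv ≤ (u² + v²)/2`, the others through the injection `i ↦ (⌊x i / q⌋, t i)`. -/
lemma block_sum_le {ι : Type*} (S : Finset ι) (x : ι → ℕ) (t : ι → ℤ) (q k : ℕ) (hq : 1 ≤ q)
    (hx1 : ∀ i ∈ S, 1 ≤ x i) (hxk : ∀ i ∈ S, x i ≤ k) (ht0 : ∀ i ∈ S, t i ≠ 0)
    (htk : ∀ i ∈ S, (t i).natAbs ≤ k) (hxinj : Set.InjOn x S)
    (hsep : ∀ i ∈ S, ∀ i' ∈ S, t i = t i' → x i / q = x i' / q → i = i') :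
    ∑ i ∈ S, (q : ℝ) / (x i * |(t i : ℝ)|) ≤ 3 * q + 2 * harm k ^ 2 := by
  rw [← Finset.sum_filter_add_sum_filter_not S (fun i => x i < q)]
  have hq' : (0 : ℝ) < q := by exact_mod_cast hq
  refine add_le_add ?_ ?_
  · have h1 : ∑ i ∈ S with x i < q, ((x i : ℝ) ^ 2)⁻¹ ≤ 2 := by
      refine le_trans ?_ (sum_inv_sq_le k)
      refine sum_comp_le_of_injOn _ _ x (fun i hi => ?_)
        (hxinj.mono (Finset.coe_subset.mpr (Finset.filter_subset _ _))) (fun n : ℕ => ((n : ℝ) ^ 2)⁻¹)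
        (fun n => by positivity)
      have hi := (Finset.mem_filter.mp hi).1
      exact Finset.mem_Icc.mpr ⟨hx1 i hi, hxk i hi⟩
    have h2 : ∑ i ∈ S with x i < q, (|(t i : ℝ)| ^ 2)⁻¹ ≤ 4 := by
      have := sum_natAbs_le (S.filter fun i => x i < q) t k
        (fun i hi => ht0 i (Finset.mem_filter.mp hi).1)
        (fun i hi => htk i (Finset.mem_filter.mp hi).1)
        (fun i hi i' hi' h => by
          have hi := Finset.mem_filter.mp hi
          have hi' := Finset.mem_filter.mp hi'
          exact hsep i hi.1 i' hi'.1 h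
            (by rw [Nat.div_eq_of_lt hi.2, Nat.div_eq_of_lt hi'.2]))
        (fun n => ((n : ℝ) ^ 2)⁻¹) (fun n => by positivity)
      simp only [Nat.cast_natAbs, Int.cast_abs] at this
      linarith [sum_inv_sq_le k]
    calc ∑ i ∈ S with x i < q, (q : ℝ) / (x i * |(t i : ℝ)|)
        ≤ ∑ i ∈ S with x i < q,
            ((q / 2 : ℝ) * ((x i : ℝ) ^ 2)⁻¹ + (q / 2 : ℝ) * (|(t i : ℝ)| ^ 2)⁻¹) := by
          refine Finset.sum_le_sum fun i _ => ?_
          rw [div_eq_mul_inv, mul_inv, ← inv_pow, ← inv_pow]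
          nlinarith [mul_nonneg hq'.le (sq_nonneg ((x i : ℝ)⁻¹ - |(t i : ℝ)|⁻¹))]
      _ ≤ 3 * q := by
          rw [Finset.sum_add_distrib, ← Finset.mul_sum, ← Finset.mul_sum]
          nlinarith
  · calc ∑ i ∈ S with ¬ x i < q, (q : ℝ) / (x i * |(t i : ℝ)|)
        ≤ ∑ i ∈ S with ¬ x i < q, ((x i / q : ℕ) : ℝ)⁻¹ * ((t i).natAbs : ℝ)⁻¹ := by
          refine Finset.sum_le_sum fun i hi => ?_
          have hi := Finset.mem_filter.mp hi
          have hd : 0 < x i / q := Nat.div_pos (not_lt.mp hi.2) hq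
          have hd' : (0 : ℝ) < ((x i / q : ℕ) : ℝ) := by exact_mod_cast hd
          have hxi : (0 : ℝ) < x i := by exact_mod_cast hx1 i hi.1
          have hti : 0 < |(t i : ℝ)| := abs_pos.mpr (by exact_mod_cast ht0 i hi.1)
          have hle : ((x i / q : ℕ) : ℝ) * q ≤ x i := by exact_mod_cast Nat.div_mul_le_self _ _
          rw [Nat.cast_natAbs, Int.cast_abs, ← mul_inv, inv_eq_one_div,
            div_le_div_iff₀ (by positivity) (by positivity)]
          nlinarith
      _ ≤ ∑ y ∈ Finset.Icc 1 k ×ˢ (Finset.Icc 1 k ×ˢ (Finset.univ : Finset Bool)),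
            (y.1 : ℝ)⁻¹ * (y.2.1 : ℝ)⁻¹ := by
          refine sum_comp_le_of_injOn _ _
            (fun i => (x i / q, ((t i).natAbs, decide (0 < t i)))) (fun i hi => ?_)
            (fun i hi i' hi' h => ?_)
            (fun y : ℕ × ℕ × Bool => (y.1 : ℝ)⁻¹ * (y.2.1 : ℝ)⁻¹) (fun y => by positivity)
          · have hi := Finset.mem_filter.mp hi
            have hd : 0 < x i / q := Nat.div_pos (not_lt.mp hi.2) hq
            have hle : x i / q ≤ x i := Nat.div_le_self _ _
            have := hxk i hi.1
            have := ht0 i hi.1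
            have := htk i hi.1
            simp only [Finset.mem_product, Finset.mem_Icc, Finset.mem_univ, and_true]
            omega
          · have hi := Finset.mem_filter.mp hi
            have hi' := Finset.mem_filter.mp hi'
            simp only [Prod.mk.injEq] at h
            exact hsep i hi.1 i' hi'.1 (int_eq_of_natAbs_sign h.2.1 h.2.2) h.1
      _ = 2 * harm k ^ 2 := by
          rw [Finset.sum_product]
          simp only [Finset.sum_product, ← Finset.mul_sum, Finset.sum_const, Finset.card_univ,
            Fintype.card_bool, ← Finset.sum_mul]
          simp only [nsmul_eq_mul, ← Finset.mul_sum, harm]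
          push_cast
          ring

/-! ### Lattice points off the line through the short vector -/

/-- Here `(n, n h - a k)` is a general lattice point and `r = q h - j k`.
Two lattice points on the same line parallel to `(q, r)` differ by an integer multiple
of `(q, r)`. -/
lemma same_line {q j n n' a a' h k : ℤ} (hq : q ≠ 0) (hco : IsCoprime q j)
    (ht : n * j - a * q = n' * j - a' * q) :
    ∃ l : ℤ, n - n' = l * q ∧ (n * h - a * k) - (n' * h - a' * k) = l * (q * h - j * k) := by
  have h1 : q ∣ (n - n') * j := ⟨a - a', by linear_combination ht⟩
  obtain ⟨l, hl⟩ := hco.dvd_of_dvd_mul_right h1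
  refine ⟨l, by rw [hl]; ring, ?_⟩
  have h2 : q * (a - a') = q * (l * j) := by linear_combination -ht + j * hl
  have h3 := mul_left_cancel₀ hq h2
  linear_combination h * hl - k * h3

lemma eq_of_div_eq {x x' c : ℕ} {l : ℤ} (hc : 0 < c) (hd : x / c = x' / c)
    (h : (x : ℤ) - x' = l * c) : x = x' := by
  have h1 := Nat.div_add_mod x c
  have h2 := Nat.div_add_mod x' c
  have h3 := Nat.mod_lt x hc
  have h4 := Nat.mod_lt x' hc
  rw [hd] at h1
  have h5 : l * c < c := by rw [← h]; omega
  have h6 : -(c : ℤ) < l * c := by rw [← h]; omega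
  have : l = 0 := by
    have hc' : (0 : ℤ) < c := by exact_mod_cast hc
    have : l < 1 := by nlinarith
    have : -1 < l := by nlinarith
    omega
  rw [this] at h
  omega

/-- Sum over the lattice points `(n, s n)` off the line through `(q, r)`. After dividing
`|t| k ≤ q |s| + n |r|` by `n |s| |t| k`, `block_sum_le` is applied once with `x = n` and twice
(for the two signs of `s`) with `x = |s|`. -/
lemma off_line_sum (h k q : ℕ) (j : ℤ) (s a : ℕ → ℤ) (hk : 2 ≤ k)
    (hq : 1 ≤ q) (hqk : q * q ≤ k) (hco : IsCoprime (q : ℤ) j) (r : ℤ) (hr : r = q * h - j * k)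
    (hr0 : r ≠ 0) (hrk : r * r ≤ k) (hs : ∀ n : ℕ, (n : ℤ) * h = s n + a n * k)
    (hsk : ∀ n, 2 * |s n| ≤ k) (hs0 : ∀ n, 1 ≤ n → n < k → s n ≠ 0)
    (hsinj : Set.InjOn s (Finset.Icc 1 (k - 1))) :
    ∑ n ∈ Finset.Icc 1 (k - 1) with (n * j - a n * q ≠ 0), 1 / ((n : ℝ) * |(s n : ℝ)|)
      ≤ (9 * Real.sqrt k + 6 * harm k ^ 2) / k := by
  set t : ℕ → ℤ := fun n => n * j - a n * q with ht
  set S := (Finset.Icc 1 (k - 1)).filter (fun n => t n ≠ 0) with hS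
  have hmem : ∀ n ∈ S, 1 ≤ n ∧ n < k ∧ t n ≠ 0 := by
    intro n hn
    have := Finset.mem_filter.mp hn
    have h2 := Finset.mem_Icc.mp this.1
    exact ⟨h2.1, by omega, this.2⟩
  have hkt : ∀ n, t n * k = q * s n - n * r := by
    intro n
    simp only [ht, hr]
    linear_combination (q : ℤ) * hs n
  have hkpos : (0 : ℝ) < k := by exact_mod_cast (by omega : 0 < k)
  have hqs : (q : ℝ) ≤ Real.sqrt k := Real.le_sqrt_of_sq_le (by rw [sq]; exact_mod_cast hqk)
  have hrs : |(r : ℝ)| ≤ Real.sqrt k :=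
    Real.le_sqrt_of_sq_le (by rw [sq_abs, sq]; exact_mod_cast hrk)
  have hq' : (0 : ℝ) < q := by exact_mod_cast hq
  have hr' : 0 < |(r : ℝ)| := abs_pos.mpr (by exact_mod_cast hr0)
  -- `|t| k ≤ q |s| + n |r|`
  have htri : ∀ n, |(t n : ℝ)| * k ≤ q * |(s n : ℝ)| + n * |(r : ℝ)| := by
    intro n
    have h1 : (t n : ℝ) * k = q * s n - n * r := by exact_mod_cast hkt n
    have h2 := abs_sub ((q : ℝ) * s n) (n * r)
    rw [← h1, abs_mul, abs_mul, abs_mul, Nat.abs_cast, Nat.abs_cast, Nat.abs_cast] at h2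
    exact h2
  have htk : ∀ n ∈ S, (t n).natAbs ≤ k := by
    intro n hn
    have h1 := htri n
    have h2 : (2 : ℝ) * |(s n : ℝ)| ≤ k := by exact_mod_cast hsk n
    have h3 : (n : ℝ) ≤ k := by exact_mod_cast (hmem n hn).2.1.le
    have h4 : (q : ℝ) * |(s n : ℝ)| ≤ Real.sqrt k * (k / 2) := by
      gcongr; linarith
    have h5 : (n : ℝ) * |(r : ℝ)| ≤ k * Real.sqrt k := by gcongr
    have h6 : |(t n : ℝ)| ≤ 3 / 2 * Real.sqrt k := by
      by_contra hcon
      nlinarith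
    have h7 := Real.sq_sqrt hkpos.le
    have h8 : |(t n : ℝ)| < k + 1 := by
      by_contra hcon
      nlinarith [sq_nonneg (Real.sqrt k - 3 / 4)]
    have h9 : (((t n).natAbs : ℕ) : ℝ) < k + 1 := by
      rw [Nat.cast_natAbs, Int.cast_abs]; exact h8
    have : (t n).natAbs < k + 1 := by exact_mod_cast h9
    omega
  have hline : ∀ n n', t n = t n' → ∃ l : ℤ, (n : ℤ) - n' = l * q ∧ s n - s n' = l * r := by
    intro n n' htt
    obtain ⟨l, h1, h2⟩ := same_line (h := h) (k := k) (by omega) hco htt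
    refine ⟨l, h1, ?_⟩
    rw [hr, ← h2]
    linear_combination hs n' - hs n
  have hA : ∑ n ∈ S, (q : ℝ) / (n * |(t n : ℝ)|) ≤ 3 * q + 2 * harm k ^ 2 := by
    refine block_sum_le S (fun n => n) t q k hq (fun n hn => (hmem n hn).1)
      (fun n hn => (hmem n hn).2.1.le) (fun n hn => (hmem n hn).2.2) htk
      (fun _ _ _ _ h => h) (fun n _ n' _ htt hd => ?_)
    obtain ⟨l, h1, -⟩ := hline n n' htt
    exact eq_of_div_eq hq hd h1
  -- `P` is meant to fix the sign `e` of `s n`, so that `n ↦ |s n|` is injective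
  have hB : ∀ P : ℕ → Prop, ∀ _ : DecidablePred P,
      (∀ n n', P n → P n' → ∃ e : ℤ, (s n).natAbs = e * s n ∧ (s n').natAbs = e * s n') →
      ∑ n ∈ S with P n, (r.natAbs : ℝ) / ((s n).natAbs * |(t n : ℝ)|)
        ≤ 3 * r.natAbs + 2 * harm k ^ 2 := by
    intro P _ hP
    have hinj : ∀ n ∈ S.filter P, ∀ n' ∈ S.filter P, (s n).natAbs = (s n').natAbs → n = n' := by
      intro n hn n' hn' he
      have hn := Finset.mem_filter.mp hn
      have hn' := Finset.mem_filter.mp hn'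
      obtain ⟨e, h1, h2⟩ := hP n n' hn.2 hn'.2
      have h0 := hs0 n (hmem n hn.1).1 (hmem n hn.1).2.1
      refine hsinj (Finset.mem_filter.mp hn.1).1 (Finset.mem_filter.mp hn'.1).1 ?_
      have he0 : e ≠ 0 := by
        rintro rfl
        rw [zero_mul] at h1
        omega
      rw [he, h2] at h1
      exact (mul_left_cancel₀ he0 h1).symm
    refine block_sum_le (S.filter P) (fun n => (s n).natAbs) t r.natAbs k
      (Int.natAbs_pos.mpr hr0) (fun n hn => ?_) (fun n hn => ?_)
      (fun n hn => (hmem n (Finset.mem_filter.mp hn).1).2.2)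
      (fun n hn => htk n (Finset.mem_filter.mp hn).1)
      (fun n hn n' hn' he => hinj n hn n' hn' he) (fun n hn n' hn' htt hd => ?_)
    · have h1 := hmem n (Finset.mem_filter.mp hn).1
      exact Int.natAbs_pos.mpr (hs0 n h1.1 h1.2.1)
    · have := hsk n
      rw [Int.abs_eq_natAbs] at this
      omega
    · obtain ⟨l, -, h2⟩ := hline n n' htt
      obtain ⟨e, h3, h4⟩ := hP n n' (Finset.mem_filter.mp hn).2 (Finset.mem_filter.mp hn').2
      refine hinj n hn n' hn' (eq_of_div_eq (l := e * l * r.sign) (Int.natAbs_pos.mpr hr0) hd ?_)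
      rw [h3, h4, mul_assoc, Int.sign_mul_natAbs]
      linear_combination e * h2
  have hB1 := hB (fun n => 0 < s n) inferInstance (fun n n' h1 h2 => ⟨1, by omega, by omega⟩)
  have hB2 := hB (fun n => ¬ 0 < s n) inferInstance (fun n n' h1 h2 => ⟨-1, by omega, by omega⟩)
  have hB3 := add_le_add hB1 hB2
  rw [Finset.sum_filter_add_sum_filter_not] at hB3
  have hterm : ∀ n ∈ S, 1 / ((n : ℝ) * |(s n : ℝ)|)
      ≤ (1 / k) * ((q : ℝ) / (n * |(t n : ℝ)|)
        + (r.natAbs : ℝ) / ((s n).natAbs * |(t n : ℝ)|)) := by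
    intro n hn
    have hm := hmem n hn
    have h1 : (0 : ℝ) < n := by exact_mod_cast hm.1
    have h2 : 0 < |(s n : ℝ)| := abs_pos.mpr (by exact_mod_cast hs0 n hm.1 hm.2.1)
    have h3 : 0 < |(t n : ℝ)| := abs_pos.mpr (by exact_mod_cast hm.2.2)
    simp only [Nat.cast_natAbs, Int.cast_abs]
    have e : (1 / (k : ℝ)) * ((q : ℝ) / (n * |(t n : ℝ)|) + |(r : ℝ)| / (|(s n : ℝ)| * |(t n : ℝ)|))
        = (q * |(s n : ℝ)| + n * |(r : ℝ)|) / ((n * |(s n : ℝ)|) * (|(t n : ℝ)| * k)) := by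
      field_simp
    rw [e, div_le_div_iff₀ (by positivity) (by positivity)]
    have := htri n
    have h4 : 0 < (n : ℝ) * |(s n : ℝ)| := by positivity
    nlinarith
  refine (Finset.sum_le_sum hterm).trans ?_
  rw [← Finset.mul_sum, Finset.sum_add_distrib, one_div, inv_mul_eq_div]
  refine div_le_div_of_nonneg_right ?_ hkpos.le
  have : (r.natAbs : ℝ) = |(r : ℝ)| := by rw [Nat.cast_natAbs, Int.cast_abs]
  rw [this] at hB3
  rw [this]
  linarith

/-! ### Clausen's function -/

/-- A finite partial sum of `Cl₂` over any index set containing `1, …, K`. -/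
lemma abs_Cl2_sub_le (θ : ℝ) (Λ : Finset ℕ) (K : ℕ) (hΛ : ∀ l, 1 ≤ l → l ≤ K → l ∈ Λ) :
    |Cl2 θ - ∑ l ∈ Λ, Real.sin (l * θ) / (l : ℝ) ^ 2| ≤ 2 / (K + 1) := by
  set g : ℕ → ℝ := fun l => Real.sin (l * θ) / (l : ℝ) ^ 2 with hg
  have hgle : ∀ l, |g l| ≤ ((l : ℝ) ^ 2)⁻¹ := by
    intro l
    rw [hg, abs_div, abs_of_nonneg (sq_nonneg (l : ℝ)), div_eq_mul_inv]
    exact mul_le_of_le_one_left (by positivity) (Real.abs_sin_le_one _)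
  have hsum : Summable g :=
    Summable.of_norm_bounded (Real.summable_nat_pow_inv.mpr one_lt_two) hgle
  have hlim : Filter.Tendsto (fun N => |∑ l ∈ Finset.range N, g l - ∑ l ∈ Λ, g l|) Filter.atTop
      (nhds |Cl2 θ - ∑ l ∈ Λ, g l|) :=
    (hsum.hasSum.tendsto_sum_nat.sub_const _).abs
  refine le_of_tendsto hlim ?_
  obtain ⟨N₀, hN₀⟩ := Finset.exists_nat_subset_range Λ
  filter_upwards [Filter.eventually_ge_atTop N₀] with N hN
  have hsub : Λ ⊆ Finset.range N := hN₀.trans (Finset.range_mono hN)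
  rw [← Finset.sum_sdiff hsub, add_sub_cancel_right]
  calc |∑ l ∈ Finset.range N \ Λ, g l|
      ≤ ∑ l ∈ Finset.range N \ Λ, |g l| := Finset.abs_sum_le_sum_abs _ _
    _ = ∑ l ∈ (Finset.range N \ Λ).erase 0, |g l| := by
        rw [Finset.sum_erase]; simp [hg]
    _ ≤ ∑ l ∈ (Finset.range N \ Λ).erase 0, ((l : ℝ) ^ 2)⁻¹ :=
        Finset.sum_le_sum fun l _ => hgle l
    _ ≤ ∑ l ∈ Finset.Ioo K N, ((l : ℝ) ^ 2)⁻¹ := by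
        refine Finset.sum_le_sum_of_subset_of_nonneg (fun l hl => ?_) (fun l _ _ => by positivity)
        simp only [Finset.mem_erase, Finset.mem_sdiff, Finset.mem_range] at hl
        rw [Finset.mem_Ioo]
        refine ⟨?_, hl.2.1⟩
        by_contra hcon
        exact hl.2.2 (hΛ l (by omega) (by omega))
    _ ≤ 2 / (K + 1) := sum_Ioo_inv_sq_le K N

lemma abs_Cl2_le (θ : ℝ) : |Cl2 θ| ≤ 2 := by
  simpa using abs_Cl2_sub_le θ ∅ 0 (fun l h1 h2 => by omega)

/-! ### The short vector and the main estimate -/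

/-- A primitive short vector of the lattice, from Dirichlet's approximation theorem. -/
lemma exists_short_vector (h k : ℕ) (hk : 2 ≤ k) (hcop : Nat.Coprime h k) :
    ∃ (q : ℕ) (j : ℤ), 1 ≤ q ∧ q < k ∧ q * q ≤ k ∧ IsCoprime (q : ℤ) j ∧
      (q * h - j * k : ℤ) ≠ 0 ∧ (q * h - j * k : ℤ) * (q * h - j * k) ≤ k := by
  have hn : 0 < Nat.sqrt k := Nat.sqrt_pos.mpr (by omega)
  obtain ⟨x, hx1, hx2⟩ := Real.exists_rat_abs_sub_le_and_den_le ((h : ℝ) / k) hn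
  have hkpos : (0 : ℝ) < k := by exact_mod_cast (by omega : 0 < k)
  have hqq : x.den * x.den ≤ k := (Nat.mul_le_mul hx2 hx2).trans (Nat.sqrt_le k)
  have hqk : x.den < k := by
    have := x.den_pos
    nlinarith
  refine ⟨x.den, x.num, x.den_pos, hqk, hqq, ?_, ?_, ?_⟩
  · rw [Int.isCoprime_iff_gcd_eq_one, Int.gcd_comm]
    exact x.reduced
  · intro h0
    have h1 : (k : ℤ) ∣ (x.den * h : ℕ) := ⟨x.num, by push_cast; linear_combination h0⟩
    have h2 : k ∣ x.den := (Nat.Coprime.symm hcop).dvd_of_dvd_mul_right (by exact_mod_cast h1)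
    exact absurd (Nat.le_of_dvd x.den_pos h2) (by omega)
  · set r : ℤ := x.den * h - x.num * k with hr
    have hd : (0 : ℝ) < x.den := by exact_mod_cast x.den_pos
    have hxr : (x : ℝ) = x.num / x.den := by exact_mod_cast (Rat.num_div_den x).symm
    have e : (h : ℝ) / k - x = r / (k * x.den) := by
      rw [hxr, hr]
      push_cast
      field_simp
    rw [e, abs_div, abs_of_pos (by positivity : (0 : ℝ) < k * x.den),
      div_le_div_iff₀ (by positivity) (by positivity)] at hx1
    have h2 : |(r : ℝ)| * (Nat.sqrt k + 1) ≤ k := by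
      have : (|(r : ℝ)| * (Nat.sqrt k + 1)) * x.den ≤ k * x.den := by linarith
      exact le_of_mul_le_mul_right this hd
    have h3 : |r| * (Nat.sqrt k + 1) ≤ k := by exact_mod_cast h2
    have h4 : k < (Nat.sqrt k + 1) * (Nat.sqrt k + 1) := Nat.lt_succ_sqrt k
    have h5 : Nat.sqrt k * Nat.sqrt k ≤ k := Nat.sqrt_le k
    zify at h4 h5
    have h6 : |r| < Nat.sqrt k + 1 := by
      by_contra hcon
      nlinarith
    have h7 : |r| ≤ Nat.sqrt k := by omega
    have h8 : r * r = |r| * |r| := (abs_mul_abs_self r).symm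
    nlinarith [abs_nonneg r]

set_option maxHeartbeats 1000000 in
/-- The estimate with the short vector `(q, r)` in place of `(β₀, γ₀)`. -/
lemma main_estimate (m h k : ℕ) (hk : 2 ≤ k) (hcop : Nat.Coprime h k) (hmk : m < k)
    (q : ℕ) (j r : ℤ) (hq : 1 ≤ q) (hqk : q * q ≤ k) (hco : IsCoprime (q : ℤ) j)
    (hr : r = q * h - j * k) (hr0 : r ≠ 0) (hrk : r * r ≤ k) :
    |(1 / (k : ℝ)) * Real.log |(sineProd ((h : ℝ) / k) m)⁻¹|
        - Cl2 (2 * π * m * |(r : ℝ)| / k) / (2 * π * (q * |(r : ℝ)|))|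
      ≤ (5 / 2 * harm k + 3 / 2 * harm k ^ 2) / k + 3 / Real.sqrt k := by
  have hkpos : (0 : ℝ) < k := by exact_mod_cast (by omega : 0 < k)
  have hq' : (1 : ℝ) ≤ q := by exact_mod_cast hq
  have hr' : 1 ≤ |(r : ℝ)| := by exact_mod_cast Int.one_le_abs hr0
  have hsq : 0 < Real.sqrt k := Real.sqrt_pos.mpr hkpos
  have hsq2 : Real.sqrt k * Real.sqrt k = k := Real.mul_self_sqrt hkpos.le
  -- `s n` is the residue of `n h` modulo `k` of least absolute value
  obtain ⟨s, a, hs, hsk⟩ : ∃ s a : ℕ → ℤ,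
      (∀ n : ℕ, (n : ℤ) * h = s n + a n * k) ∧ ∀ n, 2 * |s n| ≤ k := by
    refine ⟨fun n => Int.bmod (n * h) k, fun n => Int.bdiv (n * h) k,
      fun n => (Int.bmod_add_bdiv' _ _).symm, fun n => ?_⟩
    have h1 := Int.bmod_lt (x := (n : ℤ) * h) (m := k) (by omega)
    have h2 := Int.le_bmod (x := (n : ℤ) * h) (m := k) (by omega)
    have : |Int.bmod (n * h) k| ≤ (k : ℤ) / 2 := abs_le.mpr ⟨by omega, by omega⟩
    show 2 * |Int.bmod ((n : ℤ) * h) k| ≤ k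
    omega
  have hdvd : ∀ x : ℤ, (k : ℤ) ∣ x * h → (k : ℤ) ∣ x := fun x hx =>
    (Int.isCoprime_iff_gcd_eq_one.mpr (by
      rw [Int.gcd_natCast_natCast]; exact hcop.symm) : IsCoprime (k : ℤ) h).dvd_of_dvd_mul_right hx
  have hs0 : ∀ n, 1 ≤ n → n < k → s n ≠ 0 := by
    intro n h1 h2 h3
    have := hdvd n ⟨a n, by rw [hs n, h3]; ring⟩
    have := Int.le_of_dvd (by omega) this
    omega
  have hsinj : Set.InjOn s (Finset.Icc 1 (k - 1)) := by
    intro n hn n' hn' he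
    have hn := Finset.mem_Icc.mp hn
    have hn' := Finset.mem_Icc.mp hn'
    have h1 : (k : ℤ) ∣ (n : ℤ) - n' := hdvd _ ⟨a n - a n', by
      linear_combination hs n - hs n' + he⟩
    have h2 := Int.eq_zero_of_abs_lt_dvd h1 (by rw [abs_lt]; omega)
    omega
  have hsin : ∀ n, 1 ≤ n → n < k → 0 < 2 * |(s n : ℝ)| / k ∧
      2 * |(s n : ℝ)| / k ≤ |Real.sin (π * s n / k)| := fun n h1 h2 =>
    ⟨by
      have : 0 < |(s n : ℝ)| := abs_pos.mpr (by exact_mod_cast hs0 n h1 h2)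
      positivity, le_abs_sin_int (s n) k (by omega) (hsk n)⟩
  have hθ : ∀ n : ℕ, π * n * ((h : ℝ) / k) = π * s n / k + a n * π := by
    intro n
    have h1 : (n : ℝ) * h = s n + a n * k := by exact_mod_cast hs n
    have h2 : π * n * ((h : ℝ) / k) = π * (n * h) / k := by ring
    rw [h2, h1]
    field_simp
  have hsinabs : ∀ n : ℕ, |Real.sin (π * n * ((h : ℝ) / k))| = |Real.sin (π * s n / k)| := by
    intro n
    rw [hθ, Real.sin_add_int_mul_pi, abs_mul, abs_zpow, abs_neg, abs_one, one_zpow, one_mul]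
  have hsinne : ∀ n ∈ Finset.Icc 1 m, Real.sin (π * n * ((h : ℝ) / k)) ≠ 0 := by
    intro n hn
    have hn := Finset.mem_Icc.mp hn
    have := hsin n hn.1 (by omega)
    rw [← abs_pos, hsinabs]
    linarith
  have hlog : Real.log |(sineProd ((h : ℝ) / k) m)⁻¹|
      = ∑ i ∈ Finset.Icc 1 m, -Real.log (2 * Real.sin (π * i * ((h : ℝ) / k))) := by
    rw [Real.log_abs, Real.log_inv, sineProd,
      Real.log_prod (fun n hn => mul_ne_zero two_ne_zero (hsinne n hn)), Finset.sum_neg_distrib]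
  -- truncation of the Fourier series of `log |2 sin|`
  have hstep1 : |Real.log |(sineProd ((h : ℝ) / k) m)⁻¹|
      - ∑ i ∈ Finset.Icc 1 m, ∑ n ∈ Finset.Icc 1 (k - 1),
          Real.cos (2 * n * (π * i * ((h : ℝ) / k))) / n| ≤ harm k := by
    rw [hlog, ← Finset.sum_sub_distrib]
    refine (Finset.abs_sum_le_sum_abs _ _).trans ?_
    calc _ ≤ ∑ i ∈ Finset.Icc 1 m, (1 / 2) * |(s i : ℝ)|⁻¹ := by
          refine Finset.sum_le_sum fun i hi => ?_
          refine (log_two_sin_trunc _ (hsinne i hi) (k - 1)).trans ?_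
          have hi := Finset.mem_Icc.mp hi
          have h1 := hsin i hi.1 (by omega)
          have h2 : ((k - 1 : ℕ) : ℝ) + 1 = k := by
            exact_mod_cast (by omega : k - 1 + 1 = k)
          have h3 : 0 < |(s i : ℝ)| := abs_pos.mpr (by exact_mod_cast hs0 i hi.1 (by omega))
          rw [h2, hsinabs]
          have h4 : 2 * |(s i : ℝ)| ≤ k * |Real.sin (π * s i / k)| := by
            have := (div_le_iff₀ hkpos).mp h1.2
            linarith
          calc 1 / (k * |Real.sin (π * s i / k)|) ≤ 1 / (2 * |(s i : ℝ)|) :=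
                one_div_le_one_div_of_le (by positivity) h4
            _ = _ := by field_simp
      _ ≤ harm k := by
          rw [← Finset.mul_sum]
          have hsub : Finset.Icc 1 m ⊆ Finset.Icc 1 (k - 1) :=
            Finset.Icc_subset_Icc_right (by omega)
          have := sum_inv_abs_le (Finset.Icc 1 m) s k
            (fun i hi => hs0 i (Finset.mem_Icc.mp hi).1 (by
              have := (Finset.mem_Icc.mp hi).2; omega))
            (fun i _ => by
              have := hsk i
              rw [Int.abs_eq_natAbs] at this
              omega)
            (hsinj.mono (Finset.coe_subset.mpr hsub))
          linarith
  set t : ℕ → ℤ := fun n => n * j - a n * q with ht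
  set C : ℕ → ℝ := fun n => ∑ i ∈ Finset.Icc 1 m, Real.cos (2 * i * (π * s n / k)) with hC
  have hswap : ∑ i ∈ Finset.Icc 1 m, ∑ n ∈ Finset.Icc 1 (k - 1),
      Real.cos (2 * n * (π * i * ((h : ℝ) / k))) / n
      = ∑ n ∈ Finset.Icc 1 (k - 1), (n : ℝ)⁻¹ * C n := by
    rw [Finset.sum_comm]
    refine Finset.sum_congr rfl fun n _ => ?_
    rw [hC, Finset.mul_sum]
    refine Finset.sum_congr rfl fun i _ => ?_
    have e : 2 * n * (π * i * ((h : ℝ) / k))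
        = 2 * i * (π * s n / k) + ((i * a n : ℤ) : ℝ) * (2 * π) := by
      have := hθ n
      push_cast
      linear_combination 2 * (i : ℝ) * this
    rw [e, Real.cos_add_int_mul_two_pi, div_eq_inv_mul]
  set Mn : ℕ → ℝ := fun n =>
    if t n = 0 then Real.sin (2 * m * (π * s n / k)) / (2 * (π * s n / k)) else 0 with hMn
  -- comparison of the Dirichlet kernels with their main parts
  have hkernel : ∀ n ∈ Finset.Icc 1 (k - 1), |C n - Mn n|
      ≤ 3 / 2 + (if t n ≠ 0 then (k : ℝ) / 4 * |(s n : ℝ)|⁻¹ else 0) := by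
    intro n hn
    have hn := Finset.mem_Icc.mp hn
    have h1 := hsin n hn.1 (by omega)
    have hsn : (s n : ℝ) ≠ 0 := by exact_mod_cast hs0 n hn.1 (by omega)
    have h3 : 0 < |(s n : ℝ)| := abs_pos.mpr hsn
    by_cases h0 : t n = 0
    · simp only [hMn, h0, if_true, ne_eq, not_true, if_false, add_zero]
      refine abs_dirichlet_kernel_sub_le _ (by positivity) ?_ m
      have h2 : 2 * |(s n : ℝ)| ≤ k := by exact_mod_cast hsk n
      rw [abs_div, abs_mul, abs_of_pos Real.pi_pos, abs_of_pos hkpos,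
        div_le_div_iff₀ hkpos two_pos]
      nlinarith [Real.pi_pos]
    · simp only [hMn, h0, if_false, ne_eq, not_false_iff, if_true, sub_zero]
      have h4 : Real.sin (π * s n / k) ≠ 0 := abs_pos.mp (by linarith)
      refine (abs_dirichlet_kernel_le _ h4 m).trans ?_
      have h5 : 1 / (2 * |Real.sin (π * s n / k)|) ≤ 1 / (2 * (2 * |(s n : ℝ)| / k)) :=
        one_div_le_one_div_of_le (by linarith) (by linarith)
      have h6 : 1 / (2 * (2 * |(s n : ℝ)| / k)) = (k : ℝ) / 4 * |(s n : ℝ)|⁻¹ := by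
        field_simp
        norm_num
      linarith
  have hstep2 : |∑ n ∈ Finset.Icc 1 (k - 1), (n : ℝ)⁻¹ * C n
      - ∑ n ∈ Finset.Icc 1 (k - 1), (n : ℝ)⁻¹ * Mn n|
      ≤ 3 / 2 * harm k + (9 * Real.sqrt k + 6 * harm k ^ 2) / 4 := by
    rw [← Finset.sum_sub_distrib]
    refine (Finset.abs_sum_le_sum_abs _ _).trans ?_
    have hoff := off_line_sum h k q j s a hk hq hqk hco r hr hr0 hrk hs hsk hs0 hsinj
    calc _ ≤ ∑ n ∈ Finset.Icc 1 (k - 1), (3 / 2 * (n : ℝ)⁻¹ +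
            (if t n ≠ 0 then (k : ℝ) / 4 * (1 / ((n : ℝ) * |(s n : ℝ)|)) else 0)) := by
          refine Finset.sum_le_sum fun n hn => ?_
          rw [← mul_sub, abs_mul, abs_of_nonneg (by positivity : (0 : ℝ) ≤ (n : ℝ)⁻¹)]
          refine (mul_le_mul_of_nonneg_left (hkernel n hn) (by positivity)).trans (le_of_eq ?_)
          split_ifs
          · rw [one_div, mul_inv]; ring
          · ring
      _ ≤ 3 / 2 * harm k + (k : ℝ) / 4 * ((9 * Real.sqrt k + 6 * harm k ^ 2) / k) := by
          rw [Finset.sum_add_distrib, ← Finset.mul_sum, ← Finset.sum_filter, ← Finset.mul_sum]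
          refine add_le_add ?_ (mul_le_mul_of_nonneg_left hoff (by positivity))
          refine mul_le_mul_of_nonneg_left ?_ (by norm_num)
          exact Finset.sum_le_sum_of_subset_of_nonneg
            (Finset.Icc_subset_Icc_right (by omega)) (fun _ _ _ => by positivity)
      _ = _ := by field_simp
  -- the points on the line through `(q, r)` are the `(lq, lr)`
  have hT0 : ∀ n, 1 ≤ n → t n = 0 → n = n / q * q ∧ s n = (n / q : ℕ) * r := by
    intro n hn h0
    obtain ⟨l, h1, h2⟩ := same_line (n := n) (n' := 0) (a := a n) (a' := 0) (h := h) (k := k)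
      (by omega) hco (by simpa [ht] using h0)
    have hl : 0 ≤ l := by
      by_contra hcon
      have : (0 : ℤ) < q := by omega
      have : 0 ≤ l * q := by rw [← h1]; omega
      nlinarith
    obtain ⟨l, rfl⟩ := Int.eq_ofNat_of_zero_le hl
    have h3 : n = l * q := by
      have : (n : ℤ) = l * q := by linarith
      exact_mod_cast this
    have h4 : n / q = l := by rw [h3]; exact Nat.mul_div_cancel _ hq
    rw [h4]
    refine ⟨h3, ?_⟩
    rw [hr, ← h2]
    linear_combination - hs n
  set T0 := (Finset.Icc 1 (k - 1)).filter (fun n => t n = 0) with hT0def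
  set Λ := T0.image (fun n => n / q) with hΛdef
  have hinjT : Set.InjOn (fun n => n / q) (T0 : Set ℕ) := by
    intro n hn n' hn' he
    have hn := Finset.mem_filter.mp hn
    have hn' := Finset.mem_filter.mp hn'
    have h1 := (hT0 n (Finset.mem_Icc.mp hn.1).1 hn.2).1
    have h2 := (hT0 n' (Finset.mem_Icc.mp hn'.1).1 hn'.2).1
    simp only at he
    rw [h1, h2, he]
  set θ := 2 * π * m * |(r : ℝ)| / k with hθdef
  have hmain : ∑ n ∈ Finset.Icc 1 (k - 1), (n : ℝ)⁻¹ * Mn n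
      = k / (2 * π * (q * |(r : ℝ)|)) * ∑ l ∈ Λ, Real.sin (l * θ) / (l : ℝ) ^ 2 := by
    rw [hΛdef, Finset.sum_image hinjT, Finset.mul_sum, hT0def, Finset.sum_filter]
    refine Finset.sum_congr rfl fun n hn => ?_
    have hn := Finset.mem_Icc.mp hn
    by_cases h0 : t n = 0
    · simp only [hMn, h0, if_true]
      obtain ⟨h1, h2⟩ := hT0 n hn.1 h0
      set l := n / q with hl
      have hl0 : (l : ℝ) ≠ 0 := by
        have : l ≠ 0 := by rintro h; rw [h] at h1; omega
        exact_mod_cast this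
      have h1' : (n : ℝ) = l * q := by exact_mod_cast h1
      have h2' : (s n : ℝ) = l * r := by exact_mod_cast h2
      rw [h1', h2', hθdef]
      have hr0' : (r : ℝ) ≠ 0 := by exact_mod_cast hr0
      rcases abs_cases (r : ℝ) with ⟨hab, _⟩ | ⟨hab, _⟩
      · rw [hab]
        have e : 2 * m * (π * (l * r) / k) = l * (2 * π * m * r / k) := by ring
        rw [e]
        field_simp
      · rw [hab]
        have e : 2 * m * (π * (l * r) / k) = -(l * (2 * π * m * (-r) / k)) := by ring
        rw [e, Real.sin_neg]
        field_simp
    · simp only [hMn, h0, if_false, mul_zero]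
  -- for `l < √k / 2` one has `l q < k` and `|l r| < k / 2`, so `s (l q) = l r`
  set K := Nat.sqrt ((k - 1) / 4) with hK
  have hKΛ : ∀ l, 1 ≤ l → l ≤ K → l ∈ Λ := by
    intro l hl1 hl2
    have h1 : l * l ≤ (k - 1) / 4 := (Nat.mul_le_mul hl2 hl2).trans (Nat.sqrt_le _)
    have h2 : 4 * (l * l) < k := by omega
    have h3 : l * q < k := by
      by_contra hcon
      have h4 : k * k ≤ (l * q) * (l * q) := Nat.mul_le_mul (not_lt.mp hcon) (not_lt.mp hcon)
      have h5 : (l * q) * (l * q) ≤ (l * l) * k := by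
        calc (l * q) * (l * q) = (l * l) * (q * q) := by ring
          _ ≤ _ := Nat.mul_le_mul_left _ hqk
      nlinarith
    have h4 : 1 ≤ l * q := Nat.mul_pos hl1 hq
    have h5 : 2 * |(l : ℤ) * r| < k := by
      have h2' : 4 * ((l : ℤ) * l) < k := by exact_mod_cast h2
      refine lt_of_pow_lt_pow_left₀ 2 (by omega) ?_
      rw [mul_pow, sq_abs]
      have : (0 : ℤ) < k := by omega
      have h6 : ((l : ℤ) * l) * (r * r) ≤ ((l : ℤ) * l) * k :=
        mul_le_mul_of_nonneg_left hrk (by positivity)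
      nlinarith
    have h6 : s (l * q) = l * r := by
      have h7 : (k : ℤ) ∣ s (l * q) - l * r := ⟨l * j - a (l * q), by
        have := hs (l * q)
        push_cast at this
        rw [hr]
        linear_combination -this⟩
      have h8 := hsk (l * q)
      have h9 := Int.eq_zero_of_abs_lt_dvd h7 (by
        have := abs_sub (s (l * q)) (l * r)
        omega)
      omega
    have h7 : t (l * q) = 0 := by
      have h8 := hs (l * q)
      rw [h6, hr] at h8
      push_cast at h8
      have h9 : (k : ℤ) * t (l * q) = 0 := by
        simp only [ht]
        push_cast
        linear_combination (q : ℤ) * h8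
      rcases mul_eq_zero.mp h9 with h10 | h10
      · omega
      · exact h10
    exact Finset.mem_image.mpr ⟨l * q, Finset.mem_filter.mpr
      ⟨Finset.mem_Icc.mpr ⟨h4, by omega⟩, h7⟩, Nat.mul_div_cancel _ hq⟩
  have htail := abs_Cl2_sub_le θ Λ K hKΛ
  have hKk : Real.sqrt k / 2 ≤ (K : ℝ) + 1 := by
    have h1 : (k - 1) / 4 < (K + 1) * (K + 1) := Nat.lt_succ_sqrt _
    have h2 : k ≤ 4 * ((K + 1) * (K + 1)) := by omega
    have h3 : (k : ℝ) ≤ 4 * (((K : ℝ) + 1) * (K + 1)) := by exact_mod_cast h2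
    have h4 : Real.sqrt k ≤ 2 * ((K : ℝ) + 1) :=
      Real.sqrt_le_iff.mpr ⟨by positivity, by nlinarith⟩
    linarith
  have htail2 : 2 / ((K : ℝ) + 1) ≤ 4 / Real.sqrt k := by
    rw [div_le_div_iff₀ (by positivity) hsq]
    linarith
  set X := Real.log |(sineProd ((h : ℝ) / k) m)⁻¹| with hX
  set G := ∑ l ∈ Λ, Real.sin (l * θ) / (l : ℝ) ^ 2 with hG
  rw [hswap] at hstep1
  rw [hmain] at hstep2
  set c := 2 * π * (q * |(r : ℝ)|) with hc
  have hc6 : 6 ≤ c := by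
    have h1 : 1 ≤ (q : ℝ) * |(r : ℝ)| := by nlinarith
    nlinarith [Real.pi_gt_three]
  have hc0 : 0 < c := by linarith
  have hXG : |X - k / c * G| ≤ 5 / 2 * harm k + (9 * Real.sqrt k + 6 * harm k ^ 2) / 4 := by
    have := abs_sub_le X (∑ n ∈ Finset.Icc 1 (k - 1), (n : ℝ)⁻¹ * C n) (k / c * G)
    linarith
  have e : 1 / (k : ℝ) * X - Cl2 θ / c = (1 / k) * (X - k / c * G) - (1 / c) * (Cl2 θ - G) := by
    field_simp
    ring
  rw [e]
  refine (abs_sub _ _).trans ?_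
  rw [abs_mul, abs_mul, abs_of_pos (by positivity : (0 : ℝ) < 1 / k),
    abs_of_pos (by positivity : (0 : ℝ) < 1 / c)]
  have hfirst : 1 / (k : ℝ) * |X - k / c * G|
      ≤ (5 / 2 * harm k + 3 / 2 * harm k ^ 2) / k + (9 / 4) / Real.sqrt k := by
    refine (mul_le_mul_of_nonneg_left hXG (by positivity)).trans (le_of_eq ?_)
    have : (9 / 4) / Real.sqrt k = (9 / 4 * Real.sqrt k) / k := by
      rw [div_eq_div_iff hsq.ne' hkpos.ne', mul_assoc, hsq2]
    rw [this]
    ring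
  have hsecond : 1 / c * |Cl2 θ - G| ≤ (2 / 3) / Real.sqrt k := by
    have h1 : 1 / c ≤ 1 / 6 := one_div_le_one_div_of_le (by norm_num) hc6
    have h2 : 1 / c * |Cl2 θ - G| ≤ 1 / 6 * (4 / Real.sqrt k) :=
      mul_le_mul h1 (htail.trans htail2) (abs_nonneg _) (by norm_num)
    refine h2.trans (le_of_eq ?_)
    ring
  have h3 : (9 / 4) / Real.sqrt k + (2 / 3) / Real.sqrt k ≤ 3 / Real.sqrt k := by
    rw [← add_div]
    exact div_le_div_of_nonneg_right (by norm_num) hsq.le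
  linarith

/-! ### Transfer to the minimal pair -/

/-- The numerical inequality absorbing the powers of `log k` into `√k`, with `x = log k`. -/
lemma log_poly_le_exp (x : ℝ) (hx : 0 ≤ x) :
    5 / 2 * (1 + x) + 3 / 2 * (1 + x) ^ 2 ≤ 11.7 * Real.exp (x / 2) := by
  have h := Real.sum_le_exp_of_nonneg (x := x / 2) (by positivity) 4
  simp only [Finset.sum_range_succ, Finset.sum_range_zero, Nat.factorial] at h
  norm_num at h
  nlinarith [mul_nonneg hx (sq_nonneg (x - 3)), mul_nonneg hx (sq_nonneg (x - 1)), sq_nonneg (x - 1)]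

theorem stmt6 (m h k : ℕ) (hh : 1 ≤ h) (hhk : h < k) (hgcd : Nat.gcd h k = 1)
    (hmk : m < k) (β₀ γ₀ : ℤ) (hZ : Zhk h k (β₀, γ₀))
    (hmin : ∀ p : ℤ × ℤ, Zhk h k p → |β₀ * γ₀| ≤ |p.1 * p.2|) :
    |(1 / (k : ℝ)) * Real.log |(sineProd ((h : ℝ) / k) m)⁻¹|
        - Cl2 (2 * π * m * (γ₀ : ℝ) / k) / (2 * π * |(β₀ : ℝ) * (γ₀ : ℝ)|)|
      ≤ (16.05 + Real.sqrt 2 / π * Real.log k) / Real.sqrt k := by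
  have hk : 2 ≤ k := by omega
  have hkpos : (0 : ℝ) < k := by exact_mod_cast (by omega : 0 < k)
  have hsq : 0 < Real.sqrt k := Real.sqrt_pos.mpr hkpos
  have hsq2 : Real.sqrt k * Real.sqrt k = k := Real.mul_self_sqrt hkpos.le
  obtain ⟨q, j, hq, hqltk, hqk, hco, hr0, hrk⟩ := exists_short_vector h k hk hgcd
  obtain ⟨r, hr⟩ : ∃ r : ℤ, r = q * h - j * k := ⟨_, rfl⟩
  rw [← hr] at hr0 hrk
  have hest := main_estimate m h k hk hgcd hmk q j r hq hqk hco hr hr0 hrk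
  have hL : 0 ≤ Real.log k := Real.log_natCast_nonneg k
  have hrabs : 1 ≤ |r| := Int.one_le_abs hr0
  have hrltk : |r| < k := by
    have := abs_mul_abs_self r
    nlinarith
  have hrr : (q : ℤ) * h ≡ r [ZMOD k] :=
    Int.modEq_iff_dvd.mpr ⟨-j, by rw [hr]; ring⟩
  -- the short vector, with its sign adjusted, competes in the minimum
  have hqr : |β₀ * γ₀| ≤ q * |r| := by
    rcases abs_cases r with ⟨hab, _⟩ | ⟨hab, _⟩
    · have := hmin (q, r) ⟨by simpa using hq, by simpa using hqltk, by linarith,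
        by linarith, hrr⟩
      simpa [abs_mul] using this
    · have := hmin (-q, -r) ⟨by simpa using hq, by simpa using hqltk, by simp only; linarith,
        by simp only; linarith, by simpa using hrr.neg⟩
      simpa [abs_mul] using this
  obtain ⟨hβ1, hβk, hγ1, hγk, hmod⟩ := hZ
  simp only at hβ1 hβk hγ1 hγk hmod
  obtain ⟨a, ha⟩ := hmod.symm.dvd
  -- the powers of `log k` in the error term
  have hnum : (5 / 2 * harm k + 3 / 2 * harm k ^ 2) / k ≤ 11.7 / Real.sqrt k := by
    have h1 : harm k ≤ 1 + Real.log k := harm_le k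
    have h2 := harm_nonneg k
    have h3 := log_poly_le_exp _ hL
    have h4 : Real.exp (Real.log k / 2) = Real.sqrt k := by
      rw [Real.exp_half, Real.exp_log hkpos]
    rw [h4] at h3
    rw [div_le_div_iff₀ hkpos hsq]
    have h5 : 5 / 2 * harm k + 3 / 2 * harm k ^ 2 ≤ 11.7 * Real.sqrt k := by nlinarith
    calc _ ≤ 11.7 * Real.sqrt k * Real.sqrt k := mul_le_mul_of_nonneg_right h5 hsq.le
      _ = _ := by rw [mul_assoc, hsq2]
  have hfin : 11.7 / Real.sqrt k + 3 / Real.sqrt k + (4 / 3) / Real.sqrt k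
      ≤ (16.05 + Real.sqrt 2 / π * Real.log k) / Real.sqrt k := by
    rw [← add_div, ← add_div]
    refine div_le_div_of_nonneg_right ?_ hsq.le
    have : 0 ≤ Real.sqrt 2 / π * Real.log k := by positivity
    linarith
  have hpos : 0 < (4 / 3) / Real.sqrt k := by positivity
  by_cases ht : β₀ * j - a * q = 0
  · obtain ⟨l, h1, h2⟩ := same_line (n := β₀) (n' := 0) (a := a) (a' := 0) (h := h) (k := k)
      (by omega) hco (by simpa using ht)
    have hβ : β₀ = l * q := by linarith
    have hγ : γ₀ = l * r := by rw [hr]; linarith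
    have hl : |l| ≤ 1 := by
      have h3 : |β₀ * γ₀| = (|l| * |l|) * (q * |r|) := by
        rw [hβ, hγ, abs_mul, abs_mul, abs_mul, Nat.abs_cast]; ring
      rw [h3] at hqr
      have h4 : 0 < (q : ℤ) * |r| := by positivity
      have h5 : |l| * |l| ≤ 1 := le_of_mul_le_mul_right (by linarith) h4
      nlinarith [abs_nonneg l]
    have hl1 : |l| = 1 := by
      refine le_antisymm hl (Int.one_le_abs ?_)
      rintro rfl
      omega
    have hγr : γ₀ = |r| := by
      rw [← abs_of_pos (by omega : 0 < γ₀), hγ, abs_mul, hl1, one_mul]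
    have hβq : |β₀| = q := by
      rw [hβ, abs_mul, hl1, one_mul, Nat.abs_cast]
    have e1 : (γ₀ : ℝ) = |(r : ℝ)| := by exact_mod_cast hγr
    have e2 : |(β₀ : ℝ) * (γ₀ : ℝ)| = q * |(r : ℝ)| := by
      have : |(β₀ : ℝ)| = q := by exact_mod_cast hβq
      rw [abs_mul, this, e1, abs_abs]
    rw [e2, e1]
    linarith
  -- off the line, `|β₀ γ₀|` and `q |r|` are at least `√k / 2`, so both Clausen terms are small
  · have h1 : (k : ℤ) ≤ q * γ₀ + |β₀| * |r| := by
      have h2 : (k : ℤ) * (β₀ * j - a * q) = q * γ₀ - β₀ * r := by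
        rw [hr]; linear_combination (q : ℤ) * ha
      have h3 : (k : ℤ) ≤ |(k : ℤ) * (β₀ * j - a * q)| := by
        rw [abs_mul, Nat.abs_cast]
        exact le_mul_of_one_le_right (by omega) (Int.one_le_abs ht)
      rw [h2] at h3
      refine h3.trans ((abs_sub _ _).trans (le_of_eq ?_))
      rw [abs_mul, abs_mul, Nat.abs_cast, abs_of_pos (by omega : 0 < γ₀)]
    have h1' : (k : ℝ) ≤ q * γ₀ + |(β₀ : ℝ)| * |(r : ℝ)| := by exact_mod_cast h1
    have hqs : (q : ℝ) ≤ Real.sqrt k := Real.le_sqrt_of_sq_le (by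
      rw [sq]; exact_mod_cast hqk)
    have hrs : |(r : ℝ)| ≤ Real.sqrt k := Real.le_sqrt_of_sq_le (by
      rw [sq_abs, sq]; exact_mod_cast hrk)
    have hγ' : 1 ≤ (γ₀ : ℝ) := by exact_mod_cast hγ1
    have hβ' : 1 ≤ |(β₀ : ℝ)| := by exact_mod_cast hβ1
    have h2 : Real.sqrt k ≤ |(β₀ : ℝ)| + γ₀ := by
      have h3 : Real.sqrt k * Real.sqrt k ≤ Real.sqrt k * (|(β₀ : ℝ)| + γ₀) := by
        rw [hsq2]
        nlinarith
      exact le_of_mul_le_mul_left h3 hsq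
    have hD : Real.sqrt k / 2 ≤ |(β₀ : ℝ) * (γ₀ : ℝ)| := by
      rw [abs_mul, abs_of_pos (by linarith : 0 < (γ₀ : ℝ))]
      nlinarith [mul_nonneg (sub_nonneg.mpr hβ') (sub_nonneg.mpr hγ')]
    have hD' : Real.sqrt k / 2 ≤ q * |(r : ℝ)| := by
      have : |(β₀ : ℝ) * (γ₀ : ℝ)| ≤ q * |(r : ℝ)| := by exact_mod_cast hqr
      linarith
    have hsmall : ∀ x D : ℝ, Real.sqrt k / 2 ≤ D →
        |Cl2 x / (2 * π * D)| ≤ (2 / 3) / Real.sqrt k := by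
      intro x D hDx
      have hD0 : 0 < D := by linarith
      have h3 : 3 * Real.sqrt k ≤ 2 * π * D := by
        nlinarith [Real.pi_gt_three, mul_pos hD0 (sub_pos.mpr Real.pi_gt_three)]
      rw [abs_div, abs_of_pos (by positivity : 0 < 2 * π * D)]
      calc _ ≤ 2 / (3 * Real.sqrt k) :=
            div_le_div₀ (by norm_num) (abs_Cl2_le x) (by positivity) h3
        _ = _ := by rw [div_div]
    have h4 := hsmall (2 * π * m * (γ₀ : ℝ) / k) _ hD
    have h5 := hsmall (2 * π * m * |(r : ℝ)| / k) _ hD'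
    have h6 : (4 / 3) / Real.sqrt k = (2 / 3) / Real.sqrt k + (2 / 3) / Real.sqrt k := by
      rw [← add_div]; norm_num
    rw [abs_le] at h4 h5 hest ⊢
    constructor <;> linarith [h4.1, h4.2, h5.1, h5.2, hest.1, hest.2]
end

section
/- There exists an absolute constant τ such that for all integers m, h, k with 1 ≤ h < k, gcd(h,k) = 1 and 0 ≤ m ≤ k-1: (1/k)·| log|∏(h/k)_m| | ≤ Cl₂(π/3)/(2π·D(h,k)) + τ·(log k)/√k. -/
/-!
Write `f(x) = log|2 sin(x/2)|`, so that `log|∏(h/k)_m| = ∑_{j=1}^m f(2πjh/k)`.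

Dirichlet's theorem gives a reduced fraction `p/q` and an integer `γ` with `1 ≤ q, γ ≤ √k` and
`± h/k = p/q + γ/(qk)` (`exists_approx`). Then `(±q, γ) ∈ Z(h,k)`, so `D(h,k) ≤ qγ` (`Dhk_le`).
Put `δ = 2πγ/(qk)` and write `j = qt + r` with `1 ≤ r ≤ q`. Modulo `2π` the `j`-th point is
`2πrp/q + jδ`; for fixed `r` and varying `t` it is a progression of step `qδ`, one point in each
interval `2πrp/q + [tqδ, (t+1)qδ]`. Replacing the value of `f` at the point by its mean over this
interval costs the variation of `f` there. The intervals together cover the circle at most `γ`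
times, so the total cost is `γ` times the total variation of `f`. The means add up to an integral of
`∑_r f(2πrp/q + x) = f(qx)`, which gives `k/(2πqγ)` times a value of `Cl₂`, and `|Cl₂|` is at most
`Cl₂(π/3)` since `Cl₂' = -f` changes sign at `π/3` (`block_bound`, `abelCl_abs_le`). The at most `q`
terms left over when `q ∤ m` are bounded one by one.

Since `f` has infinite variation, it is replaced by `log|1 - ρ e^{ix}|` with `ρ = 1 - k⁻³`
(`logKer`). Its variation is `O(log k)`, it stays close to `f` at all points involved
(`log_two_sin_sub`), and its antiderivative is the Abel mean of the Clausen series (`abelCl`). The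
errors are `O((q + γ) log k) = O(√k log k)` before the division by `k`.
-/

open scoped Real

/-- `D(h,k) := min {|βγ| : (β,γ) ∈ Z(h,k)}`. -/
noncomputable def Dhk (h k : ℕ) : ℕ :=
  sInf {d : ℕ | ∃ p : ℤ × ℤ, Zhk h k p ∧ (p.1 * p.2).natAbs = d}

/-! ### The smoothed kernel and the Abel means of Clausen's function -/

/-- The smoothed kernel `log|1 - σ e^{iθ}|`, in real form; see `logKer_eq`. -/
noncomputable def logKer (σ θ : ℝ) : ℝ := Real.log (1 - 2 * σ * Real.cos θ + σ ^ 2) / 2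

/-- The Abel mean `∑ σⁿ sin(nθ)/n²` of the Clausen series. The term `n = 0` is `0 / 0 = 0`. -/
noncomputable def abelCl (σ θ : ℝ) : ℝ := ∑' n : ℕ, σ ^ n * Real.sin (n * θ) / (n : ℝ) ^ 2

lemma ker_ge (σ θ : ℝ) (h0 : 0 ≤ σ) : (1 - σ) ^ 2 ≤ 1 - 2 * σ * Real.cos θ + σ ^ 2 := by
  nlinarith [Real.cos_le_one θ]

lemma ker_pos {σ : ℝ} (h0 : 0 ≤ σ) (h1 : σ < 1) (θ : ℝ) :
    0 < 1 - 2 * σ * Real.cos θ + σ ^ 2 :=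
  lt_of_lt_of_le (by have : 0 < 1 - σ := by linarith
                     positivity) (ker_ge σ θ h0)

lemma norm_sq_ker (σ θ : ℝ) :
    ‖1 - (σ : ℂ) * Complex.exp (θ * Complex.I)‖ ^ 2 = 1 - 2 * σ * Real.cos θ + σ ^ 2 := by
  rw [← Complex.normSq_eq_norm_sq, Complex.normSq_apply, Complex.sub_re, Complex.sub_im,
    Complex.re_ofReal_mul, Complex.im_ofReal_mul, Complex.exp_ofReal_mul_I_re,
    Complex.exp_ofReal_mul_I_im, Complex.one_re, Complex.one_im]
  nlinarith [Real.sin_sq_add_cos_sq θ]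

lemma logKer_eq (σ θ : ℝ) :
    logKer σ θ = Real.log ‖1 - (σ : ℂ) * Complex.exp (θ * Complex.I)‖ := by
  rw [logKer, ← norm_sq_ker, Real.log_pow]; push_cast; ring

lemma hasDerivAt_logKer {σ : ℝ} (h0 : 0 ≤ σ) (h1 : σ < 1) (θ : ℝ) :
    HasDerivAt (logKer σ) (σ * Real.sin θ / (1 - 2 * σ * Real.cos θ + σ ^ 2)) θ := by
  have hp := ker_pos h0 h1 θ
  have h : HasDerivAt (fun θ => 1 - 2 * σ * Real.cos θ + σ ^ 2) (2 * σ * Real.sin θ) θ := by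
    have := (((Real.hasDerivAt_cos θ).const_mul (2 * σ)).const_sub 1).add_const (σ ^ 2)
    exact this.congr_deriv (by ring)
  have := (h.log hp.ne').div_const 2
  exact this.congr_deriv (by field_simp)

/-- The Fourier series of the kernel: the real part of `-log(1 - z) = ∑ zⁿ/n`. -/
lemma hasSum_logKer {σ : ℝ} (h0 : 0 ≤ σ) (h1 : σ < 1) (θ : ℝ) :
    HasSum (fun n : ℕ => σ ^ n * Real.cos (n * θ) / (n : ℝ)) (-logKer σ θ) := by
  have hz : ‖(σ : ℂ) * Complex.exp (θ * Complex.I)‖ < 1 := by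
    rw [norm_mul, Complex.norm_exp_ofReal_mul_I, Complex.norm_real, Real.norm_of_nonneg h0]
    simpa
  have h := Complex.hasSum_re (Complex.hasSum_taylorSeries_neg_log hz)
  rw [logKer_eq]
  convert h using 1
  · funext n
    rw [mul_pow, ← Complex.exp_nat_mul, ← Complex.ofReal_pow,
      show (n : ℂ) * (θ * Complex.I) = ((n * θ : ℝ) : ℂ) * Complex.I by push_cast; ring,
      Complex.div_natCast_re, Complex.re_ofReal_mul, Complex.exp_ofReal_mul_I_re]
  · rw [Complex.neg_re, Complex.log_re]

lemma summable_abelCl {σ : ℝ} (h0 : 0 ≤ σ) (h1 : σ ≤ 1) (θ : ℝ) :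
    Summable (fun n : ℕ => σ ^ n * Real.sin (n * θ) / (n : ℝ) ^ 2) := by
  refine Summable.of_norm_bounded (g := fun n : ℕ => 1 / (n : ℝ) ^ 2)
    (Real.summable_one_div_nat_pow.2 (by norm_num)) fun n => ?_
  rw [norm_div, norm_mul, Real.norm_of_nonneg (pow_nonneg h0 n), Real.norm_of_nonneg (sq_nonneg _)]
  gcongr
  exact mul_le_one₀ (pow_le_one₀ h0 h1) (norm_nonneg _) (Real.abs_sin_le_one _)

lemma hasDerivAt_abelCl {σ : ℝ} (h0 : 0 ≤ σ) (h1 : σ < 1) (θ : ℝ) :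
    HasDerivAt (abelCl σ) (-logKer σ θ) θ := by
  rw [← (hasSum_logKer h0 h1 θ).tsum_eq]
  refine hasDerivAt_tsum (u := fun n : ℕ => σ ^ n) (summable_geometric_of_lt_one h0 h1)
    (g := fun (n : ℕ) θ => σ ^ n * Real.sin (n * θ) / (n : ℝ) ^ 2)
    (g' := fun (n : ℕ) θ => σ ^ n * Real.cos (n * θ) / (n : ℝ)) (y₀ := θ)
    (fun n y => ?_) (fun n y => ?_) (summable_abelCl h0 h1.le θ) θ
  · rcases Nat.eq_zero_or_pos n with rfl | hn
    · simpa using hasDerivAt_const y (0 : ℝ)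
    · have hn' : (n : ℝ) ≠ 0 := by positivity
      have := (((Real.hasDerivAt_sin (n * y)).comp y ((hasDerivAt_id y).const_mul (n : ℝ))).const_mul
        (σ ^ n)).div_const ((n : ℝ) ^ 2)
      exact this.congr_deriv (by field_simp)
  · rcases Nat.eq_zero_or_pos n with rfl | hn
    · simp
    · rw [norm_div, norm_mul, Real.norm_of_nonneg (pow_nonneg h0 n)]
      have hn' : (1 : ℝ) ≤ n := by exact_mod_cast hn
      rw [Real.norm_of_nonneg (Nat.cast_nonneg n)]
      refine (div_le_self (by positivity) hn').trans ?_
      exact mul_le_of_le_one_right (by positivity) (Real.abs_cos_le_one _)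

lemma abelCl_neg (σ θ : ℝ) : abelCl σ (-θ) = -abelCl σ θ := by
  rw [abelCl, abelCl, ← tsum_neg]; congr 1; funext n
  rw [mul_neg, Real.sin_neg]; ring

lemma abelCl_periodic (σ : ℝ) : Function.Periodic (abelCl σ) (2 * π) := by
  intro θ
  rw [abelCl, abelCl]; congr 1; funext n
  rw [mul_add, Real.sin_add_nat_mul_two_pi]

lemma abelCl_zero (σ : ℝ) : abelCl σ 0 = 0 := by simp [abelCl]
lemma abelCl_pi (σ : ℝ) : abelCl σ π = 0 := by simp [abelCl, Real.sin_nat_mul_pi]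

/-- The maximum of `|Cl₂|` at `π/3`, for Abel means. The derivative `-logKer σ` is nonnegative on
`[0, π/3]`, while on `[π/3, π]` it is at most `-log σ / 2` because `1 - σ + σ² ≥ σ`. -/
lemma abelCl_abs_le {σ : ℝ} (h0 : 0 < σ) (h1 : σ < 1) (θ : ℝ) :
    |abelCl σ θ| ≤ abelCl σ (π / 3) + π / 2 * (-Real.log σ) := by
  have hl : 0 ≤ -Real.log σ := by have := Real.log_nonpos h0.le h1.le; linarith
  have hpi := Real.pi_pos
  have hd := hasDerivAt_abelCl h0.le h1
  have hcont : Continuous (abelCl σ) := continuous_iff_continuousAt.2 fun x => (hd x).continuousAt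
  have mono : MonotoneOn (abelCl σ) (Set.Icc 0 (π / 3)) := by
    refine monotoneOn_of_deriv_nonneg (convex_Icc _ _) hcont.continuousOn
      (fun x _ => (hd x).differentiableAt.differentiableWithinAt) fun x hx => ?_
    rw [interior_Icc] at hx
    rw [(hd x).deriv, logKer]
    have hc : Real.cos (π / 3) ≤ Real.cos x :=
      Real.cos_le_cos_of_nonneg_of_le_pi hx.1.le (by linarith) hx.2.le
    rw [Real.cos_pi_div_three] at hc
    have := Real.log_nonpos (ker_pos h0.le h1 x).le (by nlinarith)
    linarith
  have anti : AntitoneOn (fun x => abelCl σ x + Real.log σ / 2 * x) (Set.Icc (π / 3) π) := by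
    have hd' : ∀ x, HasDerivAt (fun x => abelCl σ x + Real.log σ / 2 * x)
        (-logKer σ x + Real.log σ / 2) x := fun x => by
      have := (hd x).add ((hasDerivAt_id x).const_mul (Real.log σ / 2))
      exact this.congr_deriv (by ring)
    refine antitoneOn_of_deriv_nonpos (convex_Icc _ _) (by fun_prop)
      (fun x _ => (hd' x).differentiableAt.differentiableWithinAt) fun x hx => ?_
    rw [interior_Icc] at hx
    rw [(hd' x).deriv, logKer]
    have hc : Real.cos x ≤ Real.cos (π / 3) :=
      Real.cos_le_cos_of_nonneg_of_le_pi (by linarith) hx.2.le hx.1.le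
    rw [Real.cos_pi_div_three] at hc
    have := Real.log_le_log h0 (show σ ≤ 1 - 2 * σ * Real.cos x + σ ^ 2 by
      nlinarith [sq_nonneg (1 - σ)])
    linarith
  have base : ∀ x ∈ Set.Icc 0 π, |abelCl σ x| ≤ abelCl σ (π / 3) + π / 2 * (-Real.log σ) := by
    intro x hx
    have hm0 : 0 ≤ abelCl σ (π / 3) := by
      have := mono ⟨le_rfl, by linarith⟩ ⟨by linarith, le_rfl⟩ (show (0 : ℝ) ≤ π / 3 by linarith)
      rwa [abelCl_zero] at this
    rcases le_total x (π / 3) with h | h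
    · have a := mono ⟨le_rfl, by linarith⟩ ⟨hx.1, h⟩ hx.1
      have b := mono ⟨hx.1, h⟩ ⟨by linarith, le_rfl⟩ h
      rw [abelCl_zero] at a
      rw [abs_of_nonneg a]
      nlinarith
    · have a := anti ⟨le_rfl, by linarith⟩ ⟨h, hx.2⟩ h
      have b := anti ⟨h, hx.2⟩ ⟨by linarith, le_rfl⟩ hx.2
      simp only [abelCl_pi] at a b
      have := hx.2
      have := hx.1
      rw [abs_le]; constructor <;> nlinarith
  -- Periodicity reduces to `[-π, π)`, and oddness to `[0, π]`.
  obtain ⟨y, hy, hxy⟩ := (abelCl_periodic σ).exists_mem_Ico (by positivity) θ (-π)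
  rw [hxy]
  rcases le_total 0 y with h | h
  · exact base y ⟨h, by linarith [hy.2]⟩
  · have := base (-y) ⟨by linarith, by linarith [hy.1]⟩
    rwa [abelCl_neg, abs_neg] at this

/-- Comparison of the Abel mean with the Clausen function, termwise from `1 - σⁿ ≤ √(n(1 - σ))`. -/
lemma abelCl_sub_Cl2 {σ : ℝ} (h0 : 0 < σ) (h1 : σ < 1) (θ : ℝ) :
    abelCl σ θ ≤ Cl2 θ + (∑' n : ℕ, 1 / (n : ℝ) ^ (3 / 2 : ℝ)) * Real.sqrt (1 - σ) := by
  have hs : Summable (fun n : ℕ => 1 / (n : ℝ) ^ (3 / 2 : ℝ)) :=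
    Real.summable_one_div_nat_rpow.2 (by norm_num)
  have hc : Summable (fun n : ℕ => Real.sin (n * θ) / (n : ℝ) ^ 2) := by
    simpa using summable_abelCl zero_le_one le_rfl θ
  rw [abelCl, Cl2, ← tsum_mul_right, ← hc.tsum_add (hs.mul_right _)]
  refine (summable_abelCl h0.le h1.le θ).tsum_le_tsum (fun n => ?_) (hc.add (hs.mul_right _))
  rcases Nat.eq_zero_or_pos n with rfl | hn
  · simp
  have hn' : (1 : ℝ) ≤ n := by exact_mod_cast hn
  have hn0 : (0 : ℝ) < n := by linarith
  have hpow : σ ^ n ≤ 1 := pow_le_one₀ h0.le h1.le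
  have hpow0 : 0 < σ ^ n := pow_pos h0 n
  -- `1 - σⁿ ≤ min 1 (n (1 - σ)) ≤ √(n (1 - σ))`
  have hb : 1 - σ ^ n ≤ n * (1 - σ) := by
    have := one_add_mul_le_pow (a := σ - 1) (by linarith) n
    simp at this; linarith
  have hr : 1 - σ ^ n ≤ Real.sqrt n * Real.sqrt (1 - σ) := by
    rw [← Real.sqrt_mul hn0.le]
    apply Real.le_sqrt_of_sq_le
    nlinarith
  have e : (n : ℝ) ^ 2 = (n : ℝ) ^ (3 / 2 : ℝ) * Real.sqrt n := by
    rw [Real.sqrt_eq_rpow, ← Real.rpow_add hn0, ← Real.rpow_natCast]; norm_num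
  have e2 : 1 / (n : ℝ) ^ (3 / 2 : ℝ) * Real.sqrt (1 - σ)
      = Real.sqrt n * Real.sqrt (1 - σ) / (n : ℝ) ^ 2 := by
    have : 0 < Real.sqrt n := Real.sqrt_pos.2 hn0
    have : 0 < (n : ℝ) ^ (3 / 2 : ℝ) := Real.rpow_pos_of_pos hn0 _
    rw [e]; field_simp
  rw [e2, ← add_div]
  gcongr
  nlinarith [Real.sin_le_one (n * θ), Real.neg_one_le_sin (n * θ)]

/-! ### Averaging over residues modulo `q` -/

lemma logKer_periodic (σ : ℝ) : Function.Periodic (logKer σ) (2 * π) := by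
  intro θ; rw [logKer, logKer, Real.cos_add_two_pi]

lemma logKer_neg (σ θ : ℝ) : logKer σ (-θ) = logKer σ θ := by
  rw [logKer, logKer, Real.cos_neg]

/-- The logarithm of `∏_r (1 - ζʳ α) = 1 - α^q` over the `q`-th roots of unity. -/
lemma sum_logKer {ρ : ℝ} (h0 : 0 ≤ ρ) (h1 : ρ < 1) {q : ℕ} (hq : 0 < q) (y : ℝ) :
    ∑ r ∈ Finset.range q, logKer ρ (2 * π * r / q + y) = logKer (ρ ^ q) (q * y) := by
  have hq' : (q : ℂ) ≠ 0 := by exact_mod_cast hq.ne'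
  have h := congrArg (Polynomial.eval (1 : ℂ))
    (X_pow_sub_C_eq_prod (Complex.isPrimitiveRoot_exp q hq.ne')
      (α := (ρ : ℂ) * Complex.exp (y * Complex.I)) hq rfl)
  simp only [Polynomial.eval_sub, Polynomial.eval_pow, Polynomial.eval_X, Polynomial.eval_C,
    one_pow, Polynomial.eval_prod] at h
  have hk : ∀ r : ℕ, ‖1 - Complex.exp (2 * π * Complex.I / q) ^ r *
      ((ρ : ℂ) * Complex.exp (y * Complex.I))‖
      = ‖1 - (ρ : ℂ) * Complex.exp ((2 * π * r / q + y : ℝ) * Complex.I)‖ := fun r => by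
    rw [← Complex.exp_nat_mul, mul_left_comm, ← Complex.exp_add]
    congr 4; push_cast; field_simp
  simp only [logKer_eq]
  rw [← Real.log_prod]
  · congr 1
    rw [← Finset.prod_congr rfl fun r _ => hk r, ← norm_prod, ← h, mul_pow, ← Complex.exp_nat_mul]
    congr 3
    · push_cast; rfl
    · push_cast; ring_nf
  · intro r _ h
    have := norm_sq_ker ρ (2 * π * r / q + y)
    rw [h] at this
    have := ker_pos h0 h1 (2 * π * r / q + y)
    simp_all

/-- Since `p` is invertible modulo `q`, the points `2πp(r+1)/q` run over the `q`-th division points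
of the circle. -/
lemma sum_reindex {F : ℝ → ℝ} (hF : Function.Periodic F (2 * π)) {q : ℕ} (hq : 0 < q) {p : ℤ}
    (hp : IsCoprime p (q : ℤ)) :
    ∑ r ∈ Finset.range q, F (2 * π * (p * (r + 1)) / q) =
      ∑ r ∈ Finset.range q, F (2 * π * r / q) := by
  have : NeZero q := ⟨hq.ne'⟩
  have hq' : (q : ℝ) ≠ 0 := by exact_mod_cast hq.ne'
  -- the summand depends only on the class of the numerator modulo `q`
  have key : ∀ n : ℤ, F (2 * π * n / q) = F (2 * π * (((n : ZMod q).val : ℕ) : ℝ) / q) := by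
    intro n
    have h1 : (((n : ZMod q).val : ℕ) : ℤ) = n % q := by
      rw [ZMod.val_intCast]
    have h2 : (n : ℝ) = (((n : ZMod q).val : ℕ) : ℝ) + q * ((n / q : ℤ) : ℝ) := by
      have : n = (((n : ZMod q).val : ℕ) : ℤ) + q * (n / q) := by
        rw [h1]; exact (Int.emod_add_mul_ediv n q).symm
      exact_mod_cast this
    conv_lhs => rw [h2]
    rw [show 2 * π * ((((n : ZMod q).val : ℕ) : ℝ) + q * ((n / q : ℤ) : ℝ)) / q =
      2 * π * (((n : ZMod q).val : ℕ) : ℝ) / q + ((n / q : ℤ) : ℝ) * (2 * π) by field_simp]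
    exact hF.int_mul _ _
  set ψ : ZMod q → ℝ := fun z => F (2 * π * ((z.val : ℕ) : ℝ) / q) with hψ
  have toZ : ∀ f : ZMod q → ℝ, ∑ r ∈ Finset.range q, f (r : ZMod q) = ∑ z : ZMod q, f z := by
    intro f
    refine Finset.sum_bij (fun r _ => (r : ZMod q)) (fun _ _ => Finset.mem_univ _) ?_ ?_ ?_
    · intro a ha b hb hab
      have := congrArg ZMod.val hab
      rwa [ZMod.val_cast_of_lt (Finset.mem_range.1 ha), ZMod.val_cast_of_lt (Finset.mem_range.1 hb)]
        at this
    · intro z _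
      exact ⟨z.val, Finset.mem_range.2 z.val_lt, by simp⟩
    · intros; rfl
  have hu : IsUnit ((p : ℤ) : ZMod q) := by
    obtain ⟨a, b, hab⟩ := hp
    refine IsUnit.of_mul_eq_one (a : ZMod q) ?_
    have := congrArg (Int.cast : ℤ → ZMod q) hab
    push_cast at this
    simpa [mul_comm] using this
  obtain ⟨u, hu⟩ := hu
  calc ∑ r ∈ Finset.range q, F (2 * π * (p * (r + 1)) / q)
      = ∑ r ∈ Finset.range q, ψ (u * ((r : ZMod q) + 1)) := by
        refine Finset.sum_congr rfl fun r _ => ?_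
        have := key (p * (r + 1))
        push_cast at this
        rw [this, hψ, hu]
    _ = ∑ z : ZMod q, ψ (u * (z + 1)) := toZ fun z => ψ (u * (z + 1))
    _ = ∑ z : ZMod q, ψ (u * z) := Equiv.sum_comp (Equiv.addRight (1 : ZMod q)) fun z => ψ (u * z)
    _ = ∑ z : ZMod q, ψ z := Equiv.sum_comp (Units.mulLeft u) ψ
    _ = ∑ r ∈ Finset.range q, ψ (r : ZMod q) := (toZ ψ).symm
    _ = ∑ r ∈ Finset.range q, F (2 * π * r / q) := by
        refine Finset.sum_congr rfl fun r hr => ?_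
        rw [hψ]; simp only
        rw [ZMod.val_cast_of_lt (Finset.mem_range.1 hr)]

/-! ### Variation of the kernel -/

/-- The variation function of `logKer ρ`: the integral of `|(logKer ρ)'|` from `0` to `θ`. -/
noncomputable def kerVar (ρ θ : ℝ) : ℝ :=
  ∫ x in (0 : ℝ)..θ, |ρ * Real.sin x / (1 - 2 * ρ * Real.cos x + ρ ^ 2)|

lemma continuous_kerDeriv {ρ : ℝ} (h0 : 0 ≤ ρ) (h1 : ρ < 1) :
    Continuous fun x => ρ * Real.sin x / (1 - 2 * ρ * Real.cos x + ρ ^ 2) :=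
  Continuous.div (by fun_prop) (by fun_prop) fun x => (ker_pos h0 h1 x).ne'

lemma hasDerivAt_kerVar {ρ : ℝ} (h0 : 0 ≤ ρ) (h1 : ρ < 1) (θ : ℝ) :
    HasDerivAt (kerVar ρ) |ρ * Real.sin θ / (1 - 2 * ρ * Real.cos θ + ρ ^ 2)| θ :=
  (continuous_kerDeriv h0 h1).abs.integral_hasStrictDerivAt 0 θ |>.hasDerivAt

/-- The kernel increases on `[0, π]` from `log(1 - ρ)` to `log(1 + ρ)` and decreases back on
`[π, 2π]`, which gives its variation over a period. -/
lemma kerVar_add_two_pi {ρ : ℝ} (h0 : 0 ≤ ρ) (h1 : ρ < 1) (θ : ℝ) :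
    kerVar ρ (θ + 2 * π) = kerVar ρ θ + 2 * Real.log ((1 + ρ) / (1 - ρ)) := by
  have hc := continuous_kerDeriv h0 h1
  have hint := fun a b => hc.abs.intervalIntegrable (μ := MeasureTheory.volume) a b
  have hint' := fun a b => hc.intervalIntegrable (μ := MeasureTheory.volume) a b
  have hpi := Real.pi_pos
  have hper : Function.Periodic
      (fun x => |ρ * Real.sin x / (1 - 2 * ρ * Real.cos x + ρ ^ 2)|) (2 * π) := by
    intro x; simp only [Real.sin_add_two_pi, Real.cos_add_two_pi]
  have hV : ∫ x in (0 : ℝ)..(0 + 2 * π), |ρ * Real.sin x / (1 - 2 * ρ * Real.cos x + ρ ^ 2)|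
      = 2 * Real.log ((1 + ρ) / (1 - ρ)) := by
    rw [zero_add, ← intervalIntegral.integral_add_adjacent_intervals (hint 0 π) (hint π (2 * π))]
    have e1 : ∫ x in (0 : ℝ)..π, |ρ * Real.sin x / (1 - 2 * ρ * Real.cos x + ρ ^ 2)|
        = logKer ρ π - logKer ρ 0 := by
      rw [← intervalIntegral.integral_eq_sub_of_hasDerivAt
        (fun x _ => hasDerivAt_logKer h0 h1 x) (hint' _ _)]
      refine intervalIntegral.integral_congr fun x hx => ?_
      rw [Set.uIcc_of_le hpi.le] at hx
      exact abs_of_nonneg (div_nonneg (mul_nonneg h0 (Real.sin_nonneg_of_mem_Icc hx))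
        (ker_pos h0 h1 x).le)
    have e2 : ∫ x in π..(2 * π), |ρ * Real.sin x / (1 - 2 * ρ * Real.cos x + ρ ^ 2)|
        = -(logKer ρ (2 * π) - logKer ρ π) := by
      rw [← intervalIntegral.integral_eq_sub_of_hasDerivAt
        (fun x _ => hasDerivAt_logKer h0 h1 x) (hint' _ _), ← intervalIntegral.integral_neg]
      refine intervalIntegral.integral_congr fun x hx => ?_
      rw [Set.uIcc_of_le (by linarith)] at hx
      have : Real.sin x ≤ 0 := by
        rw [← Real.sin_sub_two_pi]
        exact Real.sin_nonpos_of_nonpos_of_neg_pi_le (by linarith [hx.2]) (by linarith [hx.1])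
      exact abs_of_nonpos (div_nonpos_of_nonpos_of_nonneg
        (mul_nonpos_of_nonneg_of_nonpos h0 this) (ker_pos h0 h1 x).le)
    rw [e1, e2]
    have a1 : logKer ρ π = Real.log (1 + ρ) := by
      rw [logKer, Real.cos_pi, show 1 - 2 * ρ * -1 + ρ ^ 2 = (1 + ρ) ^ 2 by ring, Real.log_pow]
      push_cast; ring
    have a2 : logKer ρ 0 = Real.log (1 - ρ) := by
      rw [logKer, Real.cos_zero, show 1 - 2 * ρ * 1 + ρ ^ 2 = (1 - ρ) ^ 2 by ring, Real.log_pow]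
      push_cast; ring
    have a3 : logKer ρ (2 * π) = logKer ρ 0 := by
      simpa using logKer_periodic ρ 0
    rw [a3, a1, a2, Real.log_div (by linarith) (by linarith)]; ring
  rw [kerVar, hper.intervalIntegral_add_eq_add 0 θ hint, hV, kerVar]

/-- Translates by the `q`-th division points of an interval of length at most `2πN/q` cover the circle
at most `N` times. -/
lemma sum_kerVar {ρ : ℝ} (h0 : 0 ≤ ρ) (h1 : ρ < 1) {q : ℕ} (hq : 0 < q) {p : ℤ}
    (hp : IsCoprime p (q : ℤ)) {L : ℝ} {N : ℕ} (hL : L ≤ 2 * π * N / q) :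
    ∑ r ∈ Finset.range q,
      (kerVar ρ (2 * π * (p * (r + 1)) / q + L) - kerVar ρ (2 * π * (p * (r + 1)) / q))
      ≤ N * (2 * Real.log ((1 + ρ) / (1 - ρ))) := by
  have hq' : (q : ℝ) ≠ 0 := by exact_mod_cast hq.ne'
  have hmono : Monotone (kerVar ρ) :=
    monotone_of_hasDerivAt_nonneg (hasDerivAt_kerVar h0 h1) fun _ => abs_nonneg _
  rw [sum_reindex (F := fun x => kerVar ρ (x + L) - kerVar ρ x) (fun x => by
    simp only
    rw [add_right_comm, kerVar_add_two_pi h0 h1, kerVar_add_two_pi h0 h1]; ring) hq hp]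
  calc _ ≤ ∑ r ∈ Finset.range q,
        (kerVar ρ (2 * π * (r + N : ℕ) / q) - kerVar ρ (2 * π * r / q)) := by
        refine Finset.sum_le_sum fun r _ => ?_
        refine sub_le_sub_right (hmono ?_) _
        push_cast
        rw [mul_add, add_div]; linarith
    _ = _ := by
        clear hL
        induction N with
        | zero => simp
        | succ N ih =>
          have := Finset.sum_range_sub (fun r : ℕ => kerVar ρ (2 * π * (r + N : ℕ) / q)) q
          have e : kerVar ρ (2 * π * (q + N : ℕ) / q) = kerVar ρ (2 * π * (0 + N : ℕ) / q)
              + 2 * Real.log ((1 + ρ) / (1 - ρ)) := by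
            rw [← kerVar_add_two_pi h0 h1]; congr 1; push_cast; field_simp; ring
          rw [e] at this
          calc _ = ∑ r ∈ Finset.range q,
                ((kerVar ρ (2 * π * (r + 1 + N : ℕ) / q) - kerVar ρ (2 * π * (r + N : ℕ) / q))
                + (kerVar ρ (2 * π * (r + N : ℕ) / q) - kerVar ρ (2 * π * r / q))) := by
                refine Finset.sum_congr rfl fun r _ => ?_
                rw [show r + (N + 1) = r + 1 + N by ring]; ring
            _ = _ := by
              rw [Finset.sum_add_distrib, ih, this]; push_cast; ring

/-- A value of the kernel on `[a, b]` differs from its mean over `[a, b]` by at most its variation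
there. The mean is written through the antiderivative `-abelCl ρ`. -/
lemma logKer_sub_slope {ρ : ℝ} (h0 : 0 ≤ ρ) (h1 : ρ < 1) {a b x : ℝ} (hab : a < b)
    (hax : a ≤ x) (hxb : x ≤ b) :
    |logKer ρ x - -(abelCl ρ b - abelCl ρ a) / (b - a)| ≤ kerVar ρ b - kerVar ρ a := by
  obtain ⟨c, hc, hs⟩ := exists_hasDerivAt_eq_slope (abelCl ρ) (fun x => -logKer ρ x) hab
    (fun x _ => (hasDerivAt_abelCl h0 h1 x).continuousAt.continuousWithinAt)
    fun x _ => hasDerivAt_abelCl h0 h1 x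
  rw [neg_div, ← hs, neg_neg]
  have hmono : Monotone (kerVar ρ) :=
    monotone_of_hasDerivAt_nonneg (hasDerivAt_kerVar h0 h1) fun _ => abs_nonneg _
  have m1 : Monotone (fun x => kerVar ρ x - logKer ρ x) :=
    monotone_of_hasDerivAt_nonneg
      (fun x => (hasDerivAt_kerVar h0 h1 x).sub (hasDerivAt_logKer h0 h1 x))
      fun x => sub_nonneg.2 (le_abs_self _)
  have m2 : Monotone (fun x => kerVar ρ x + logKer ρ x) :=
    monotone_of_hasDerivAt_nonneg
      (fun x => (hasDerivAt_kerVar h0 h1 x).add (hasDerivAt_logKer h0 h1 x))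
      fun x => by
        have := neg_abs_le (ρ * Real.sin x / (1 - 2 * ρ * Real.cos x + ρ ^ 2))
        simp only [Pi.zero_apply]; linarith
  have v1 := hmono hax
  have v2 := hmono hxb
  have v3 := hmono hc.1.le
  have v4 := hmono hc.2.le
  rw [abs_le]
  rcases le_total x c with h | h
  · have := m1 h; have := m2 h; simp only at *; constructor <;> linarith
  · have := m1 h; have := m2 h; simp only at *; constructor <;> linarith

/-- The antiderivative form of `sum_logKer`. -/
lemma sum_abelCl_sub {ρ : ℝ} (h0 : 0 ≤ ρ) (h1 : ρ < 1) {q : ℕ} (hq : 0 < q) {p : ℤ}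
    (hp : IsCoprime p (q : ℤ)) (y : ℝ) :
    ∑ r ∈ Finset.range q,
      (abelCl ρ (2 * π * (p * (r + 1)) / q + y) - abelCl ρ (2 * π * (p * (r + 1)) / q))
      = abelCl (ρ ^ q) (q * y) / q := by
  have hq' : (q : ℝ) ≠ 0 := by exact_mod_cast hq.ne'
  have hs0 : 0 ≤ ρ ^ q := pow_nonneg h0 q
  have hs1 : ρ ^ q < 1 := pow_lt_one₀ h0 h1 hq.ne'
  set A : ℝ → ℝ := fun y => ∑ r ∈ Finset.range q,
      (abelCl ρ (2 * π * (p * (r + 1)) / q + y) - abelCl ρ (2 * π * (p * (r + 1)) / q)) with hA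
  have hdA : ∀ y, HasDerivAt A (-logKer (ρ ^ q) (q * y)) y := by
    intro y
    have : HasDerivAt A (∑ r ∈ Finset.range q, -logKer ρ (2 * π * (p * (r + 1)) / q + y)) y := by
      refine HasDerivAt.fun_sum fun r _ => ?_
      exact ((hasDerivAt_abelCl h0 h1 _).comp_const_add _ y).sub_const _
    refine this.congr_deriv ?_
    rw [sum_reindex (F := fun x => -logKer ρ (x + y)) (fun x => by
      simp only
      rw [add_right_comm, logKer_periodic]) hq hp, Finset.sum_neg_distrib, sum_logKer h0 h1 hq]
  have hdB : ∀ y, HasDerivAt (fun y => abelCl (ρ ^ q) (q * y) / q) (-logKer (ρ ^ q) (q * y)) y := by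
    intro y
    have := ((hasDerivAt_abelCl hs0 hs1 (q * y)).comp y
      ((hasDerivAt_id y).const_mul (q : ℝ))).div_const (q : ℝ)
    exact this.congr_deriv (by field_simp)
  have hconst := is_const_of_deriv_eq_zero (f := fun y => A y - abelCl (ρ ^ q) (q * y) / q)
    (fun y => ((hdA y).sub (hdB y)).differentiableAt)
    (fun y => by rw [((hdA y).fun_sub (hdB y)).deriv, sub_self]) y 0
  have hA0 : A 0 = 0 := by simp [hA]
  simp only [hA0, mul_zero, abelCl_zero, zero_div, sub_zero] at hconst
  linarith

/-! ### The sum over complete blocks of length `q` -/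

lemma sum_range_block (F : ℕ → ℝ) (q M : ℕ) :
    ∑ j ∈ Finset.range (q * M), F j
      = ∑ r ∈ Finset.range q, ∑ t ∈ Finset.range M, F (q * t + r) := by
  rw [Finset.sum_comm]
  induction M with
  | zero => simp
  | succ M ih => rw [Nat.mul_succ, Finset.sum_range_add, ih, Finset.sum_range_succ]

/-- The main estimate: for an angle at distance `δ` from `2πp/q`, the sum of the kernel over `M` blocks
of length `q` is a value of an Abel mean divided by `q²δ`, up to `N` times the total variation. -/
lemma block_bound {ρ : ℝ} (h0 : 0 ≤ ρ) (h1 : ρ < 1) {q : ℕ} (hq : 0 < q) {p : ℤ}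
    (hp : IsCoprime p (q : ℤ)) {δ : ℝ} (hδ : 0 < δ) {M N : ℕ}
    (hL : M * (q * δ) ≤ 2 * π * N / q) :
    |∑ j ∈ Finset.range (q * M), logKer ρ ((j + 1) * (2 * π * p / q + δ))|
      ≤ |abelCl (ρ ^ q) (q * (M * (q * δ)))| / (q * (q * δ))
        + N * (2 * Real.log ((1 + ρ) / (1 - ρ))) := by
  have hq0 : (0 : ℝ) < q := by exact_mod_cast hq
  set ε : ℝ := q * δ with hε
  have hε0 : 0 < ε := mul_pos hq0 hδ
  set c : ℕ → ℝ := fun r => 2 * π * (p * (r + 1)) / q with hcdef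
  have hterm : ∀ r ∈ Finset.range q, ∀ t : ℕ,
      |logKer ρ (((q * t + r : ℕ) + 1) * (2 * π * p / q + δ))
        - -(abelCl ρ (c r + (t + 1 : ℕ) * ε) - abelCl ρ (c r + t * ε)) / ε|
      ≤ kerVar ρ (c r + (t + 1 : ℕ) * ε) - kerVar ρ (c r + t * ε) := by
    intro r hr t
    have hr' : (r : ℝ) + 1 ≤ q := by exact_mod_cast Finset.mem_range.1 hr
    have e : (((q * t + r : ℕ) : ℝ) + 1) * (2 * π * p / q + δ)
        = c r + t * ε + (r + 1) * δ + ((t * p : ℤ) : ℝ) * (2 * π) := by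
      rw [hcdef, hε]; push_cast; field_simp; ring
    rw [e, (logKer_periodic ρ).int_mul]
    have hε' : (c r + (t + 1 : ℕ) * ε) - (c r + t * ε) = ε := by push_cast; ring
    have := logKer_sub_slope h0 h1 (a := c r + t * ε) (b := c r + (t + 1 : ℕ) * ε)
      (x := c r + t * ε + (r + 1) * δ) (by linarith)
      (by have : 0 ≤ ((r : ℝ) + 1) * δ := by positivity
          linarith)
      (by have : ((r : ℝ) + 1) * δ ≤ ε := by rw [hε]; gcongr
          linarith)
    rwa [hε'] at this
  have hmain : ∑ r ∈ Finset.range q, ∑ t ∈ Finset.range M,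
      -(abelCl ρ (c r + (t + 1 : ℕ) * ε) - abelCl ρ (c r + t * ε)) / ε
      = -(abelCl (ρ ^ q) (q * (M * ε)) / (q * ε)) := by
    have : ∀ r ∈ Finset.range q, ∑ t ∈ Finset.range M,
        -(abelCl ρ (c r + (t + 1 : ℕ) * ε) - abelCl ρ (c r + t * ε)) / ε
        = -(abelCl ρ (c r + M * ε) - abelCl ρ (c r)) / ε := by
      intro r _
      rw [← Finset.sum_div, Finset.sum_neg_distrib,
        Finset.sum_range_sub (fun t : ℕ => abelCl ρ (c r + t * ε))]
      simp
    rw [Finset.sum_congr rfl this, ← Finset.sum_div, Finset.sum_neg_distrib,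
      sum_abelCl_sub h0 h1 hq hp, neg_div, div_div]
  have herr : ∑ r ∈ Finset.range q, ∑ t ∈ Finset.range M,
      (kerVar ρ (c r + (t + 1 : ℕ) * ε) - kerVar ρ (c r + t * ε))
      ≤ N * (2 * Real.log ((1 + ρ) / (1 - ρ))) := by
    refine le_trans (le_of_eq ?_) (sum_kerVar h0 h1 hq hp hL)
    refine Finset.sum_congr rfl fun r _ => ?_
    rw [Finset.sum_range_sub (fun t : ℕ => kerVar ρ (c r + t * ε))]
    simp [hcdef]
  have hdiff : |∑ j ∈ Finset.range (q * M), logKer ρ ((j + 1) * (2 * π * p / q + δ))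
      - -(abelCl (ρ ^ q) (q * (M * ε)) / (q * ε))| ≤ N * (2 * Real.log ((1 + ρ) / (1 - ρ))) := by
    rw [sum_range_block, ← hmain, ← Finset.sum_sub_distrib]
    simp only [← Finset.sum_sub_distrib]
    refine le_trans (Finset.abs_sum_le_sum_abs _ _) (le_trans (Finset.sum_le_sum fun r hr => ?_) herr)
    exact (Finset.abs_sum_le_sum_abs _ _).trans (Finset.sum_le_sum fun t _ => hterm r hr t)
  have habs : |abelCl (ρ ^ q) (q * (M * ε))| / (q * ε)
      = |(-(abelCl (ρ ^ q) (q * (M * ε)) / (q * ε)))| := by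
    rw [abs_neg, abs_div, abs_of_pos (mul_pos hq0 hε0)]
  rw [habs]
  have := abs_sub_abs_le_abs_sub (∑ j ∈ Finset.range (q * M),
    logKer ρ ((j + 1) * (2 * π * p / q + δ))) (-(abelCl (ρ ^ q) (q * (M * ε)) / (q * ε)))
  linarith

/-! ### Comparison of the sine product with the kernel -/

/-- From `k = ∑_{i<k} (1 - zⁱ)` and `|1 - zⁱ| ≤ i |1 - z|`. -/
lemma norm_one_sub_root {z : ℂ} {k : ℕ} (hk : 0 < k) (hz : z ^ k = 1) (hz1 : z ≠ 1) :
    1 / (k : ℝ) ≤ ‖1 - z‖ := by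
  have hk' : (0 : ℝ) < k := by exact_mod_cast hk
  have hn : ‖z‖ = 1 := Complex.norm_eq_one_of_pow_eq_one hz hk.ne'
  have hgeom : ∑ i ∈ Finset.range k, z ^ i = 0 := by
    have := geom_sum_mul z k
    rw [hz, sub_self] at this
    exact (mul_eq_zero.1 this).resolve_right (sub_ne_zero.2 hz1)
  have hi : ∀ i : ℕ, ‖1 - z ^ i‖ ≤ i * ‖1 - z‖ := by
    intro i
    induction i with
    | zero => simp
    | succ i ih =>
      calc ‖1 - z ^ (i + 1)‖ = ‖(1 - z ^ i) + z ^ i * (1 - z)‖ := by ring_nf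
        _ ≤ ‖1 - z ^ i‖ + ‖z ^ i * (1 - z)‖ := norm_add_le _ _
        _ ≤ i * ‖1 - z‖ + ‖1 - z‖ := by
            rw [norm_mul, norm_pow, hn, one_pow, one_mul]; gcongr
        _ = _ := by push_cast; ring
  have h1 : (k : ℝ) ≤ k * (k * ‖1 - z‖) := by
    calc (k : ℝ) = ‖∑ i ∈ Finset.range k, (1 - z ^ i)‖ := by
          rw [Finset.sum_sub_distrib, hgeom]; simp
      _ ≤ ∑ i ∈ Finset.range k, ‖1 - z ^ i‖ := norm_sum_le _ _
      _ ≤ ∑ i ∈ Finset.range k, (k * ‖1 - z‖) := by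
          refine Finset.sum_le_sum fun i hik => (hi i).trans ?_
          gcongr
          exact (Finset.mem_range.1 hik).le
      _ = _ := by simp
  rw [div_le_iff₀ hk']
  nlinarith

lemma abs_two_sin (x : ℝ) :
    |2 * Real.sin (x / 2)| = ‖1 - Complex.exp (x * Complex.I)‖ := by
  have h := norm_sq_ker 1 x
  rw [Complex.ofReal_one, one_mul] at h
  rw [← abs_of_nonneg (norm_nonneg (1 - Complex.exp (x * Complex.I)))]
  rw [← sq_eq_sq_iff_abs_eq_abs, h]
  have := Real.cos_two_mul (x / 2)
  rw [mul_div_cancel₀ x two_ne_zero] at this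
  nlinarith [Real.sin_sq_add_cos_sq (x / 2)]

lemma two_sin_ge {h k j : ℕ} (hk : 0 < k) (hc : Nat.gcd h k = 1) (hj : 0 < j) (hjk : j < k) :
    1 / (k : ℝ) ≤ |2 * Real.sin (π * j * ((h : ℝ) / k))| := by
  have hk' : (k : ℂ) ≠ 0 := by exact_mod_cast hk.ne'
  rw [show π * j * ((h : ℝ) / k) = (j * (2 * π * h / k)) / 2 by ring, abs_two_sin]
  have e : Complex.exp ((j * (2 * π * h / k) : ℝ) * Complex.I)
      = Complex.exp (2 * π * Complex.I / k) ^ (j * h) := by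
    rw [← Complex.exp_nat_mul]; congr 1; push_cast; field_simp
  have hp := Complex.isPrimitiveRoot_exp k hk.ne'
  rw [e]
  refine norm_one_sub_root hk ?_ ?_
  · rw [pow_right_comm, hp.pow_eq_one, one_pow]
  · intro h1
    have hd := hp.dvd_of_pow_eq_one _ h1
    have : k ∣ j := Nat.Coprime.dvd_of_dvd_mul_right (Nat.Coprime.symm hc) hd
    exact absurd (Nat.le_of_dvd hj this) (by omega)

lemma log_two_sin_sub {k : ℕ} (hk : 2 ≤ k) {x : ℝ} (hx : 1 / (k : ℝ) ≤ |2 * Real.sin (x / 2)|) :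
    |Real.log |2 * Real.sin (x / 2)| - logKer (1 - 1 / (k : ℝ) ^ 3) x| ≤ 2 / (k : ℝ) ^ 2 := by
  have hk2 : (2 : ℝ) ≤ k := by exact_mod_cast hk
  have hk0 : (0 : ℝ) < k := by linarith
  rw [logKer_eq, abs_two_sin] at *
  set ρ : ℝ := 1 - 1 / (k : ℝ) ^ 3 with hρ
  set A := ‖1 - Complex.exp (x * Complex.I)‖ with hA
  set B := ‖1 - (ρ : ℂ) * Complex.exp (x * Complex.I)‖ with hB
  have hAB : |A - B| ≤ 1 / (k : ℝ) ^ 3 := by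
    refine (abs_norm_sub_norm_le _ _).trans (le_of_eq ?_)
    rw [show 1 - Complex.exp (x * Complex.I) - (1 - (ρ : ℂ) * Complex.exp (x * Complex.I))
      = ((ρ - 1 : ℝ) : ℂ) * Complex.exp (x * Complex.I) by push_cast; ring, norm_mul,
      Complex.norm_exp_ofReal_mul_I, mul_one, Complex.norm_real, Real.norm_eq_abs, hρ,
      show (1 - 1 / (k : ℝ) ^ 3 - 1) = -(1 / (k : ℝ) ^ 3) by ring, abs_neg, abs_of_pos (by positivity)]
  have hc : 1 / (k : ℝ) ^ 3 ≤ 1 / (2 * k) := by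
    apply one_div_le_one_div_of_le (by positivity); nlinarith [mul_le_mul hk2 hk2 (by norm_num) hk0.le]
  have hhalf : 1 / (k : ℝ) = 1 / (2 * k) + 1 / (2 * k) := by field_simp; norm_num
  have hpos2 : 0 < 1 / (2 * (k : ℝ)) := by positivity
  have hAm : 1 / (2 * (k : ℝ)) ≤ A := by linarith
  have hBm : 1 / (2 * (k : ℝ)) ≤ B := by linarith [(abs_le.1 hAB).2]
  have hlog : ∀ u v : ℝ, 1 / (2 * (k : ℝ)) ≤ u → 1 / (2 * (k : ℝ)) ≤ v → |u - v| ≤ 1 / (k : ℝ) ^ 3 →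
      Real.log u - Real.log v ≤ 2 / (k : ℝ) ^ 2 := by
    intro u v hu hv huv
    have hu0 : 0 < u := by linarith
    have hv0 : 0 < v := by linarith
    rw [← Real.log_div hu0.ne' hv0.ne']
    have h1 := Real.log_le_sub_one_of_pos (div_pos hu0 hv0)
    have h2 : u / v - 1 = (u - v) / v := by field_simp
    have h3 : (u - v) / v ≤ (1 / (k : ℝ) ^ 3) / (1 / (2 * (k : ℝ))) :=
      div_le_div₀ (by positivity) ((le_abs_self _).trans huv) hpos2 hv
    have h4 : (1 / (k : ℝ) ^ 3) / (1 / (2 * (k : ℝ))) = 2 / (k : ℝ) ^ 2 := by field_simp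
    linarith
  rw [abs_le]
  constructor
  · have := hlog B A hBm hAm (by rwa [abs_sub_comm]); linarith
  · exact hlog A B hAm hBm hAB

lemma sineProd_eq (θ : ℝ) (m : ℕ) :
    sineProd θ m = ∏ j ∈ Finset.range m, 2 * Real.sin (π * (j + 1 : ℕ) * θ) := by
  rw [sineProd]
  induction m with
  | zero => simp
  | succ m ih => rw [Finset.prod_Icc_succ_top (by omega), ih, Finset.prod_range_succ]

/-! ### Diophantine approximation -/

/-- Dirichlet's approximation `± h/k = p/q + γ/(qk)` with `q` and `γ` both at most `√k`. The sign `s`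
makes the error positive, and it is nonzero because `q < k`. -/
lemma exists_approx {h k : ℕ} (hk : 2 ≤ k) (hc : Nat.gcd h k = 1) :
    ∃ (q γ : ℕ) (p s : ℤ), 0 < q ∧ 0 < γ ∧ q ≤ Nat.sqrt k ∧ γ ≤ Nat.sqrt k ∧
      IsCoprime p (q : ℤ) ∧ (s = 1 ∨ s = -1) ∧ s * q * h = p * k + γ := by
  set n := Nat.sqrt k with hn
  have hn0 : 0 < n := Nat.sqrt_pos.2 (by omega)
  have hnk : n < k := Nat.sqrt_lt_self (by omega)
  obtain ⟨r, hr, hrn⟩ := Real.exists_rat_abs_sub_le_and_den_le ((h : ℝ) / k) hn0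
  have hk0 : (0 : ℝ) < k := by exact_mod_cast (by omega : 0 < k)
  have hq0 : (0 : ℝ) < r.den := by exact_mod_cast r.pos
  set Γ : ℤ := r.den * h - r.num * k with hΓ
  have hΓ0 : Γ ≠ 0 := by
    intro h0
    have h1 : (r.den : ℤ) * h = r.num * k := by linarith
    have h2 : (k : ℤ) ∣ (r.den : ℤ) * h := ⟨r.num, by rw [h1]; ring⟩
    have h3 : k ∣ r.den * h := by exact_mod_cast h2
    have h4 : k ∣ r.den := Nat.Coprime.dvd_of_dvd_mul_right (Nat.Coprime.symm hc) h3
    have := Nat.le_of_dvd r.pos h4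
    omega
  have hval : (h : ℝ) / k - r = Γ / (r.den * k) := by
    rw [Rat.cast_def r, hΓ]; push_cast; field_simp
  have hle : (Γ.natAbs : ℝ) * (n + 1) ≤ k := by
    rw [hval, abs_div, abs_of_pos (mul_pos hq0 hk0), div_le_div_iff₀ (by positivity) (by positivity)]
      at hr
    have h2 : |(Γ : ℝ)| = (Γ.natAbs : ℝ) := by rw [Nat.cast_natAbs]; push_cast; rfl
    rw [h2] at hr
    have : (r.den : ℝ) * ((Γ.natAbs : ℝ) * (n + 1)) ≤ r.den * k := by linarith
    exact le_of_mul_le_mul_left this hq0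
  have hle' : Γ.natAbs * (n + 1) ≤ k := by exact_mod_cast hle
  have hlt : k < (n + 1) * (n + 1) := Nat.lt_succ_sqrt k
  have hγn : Γ.natAbs ≤ n := by
    have : Γ.natAbs < n + 1 := lt_of_mul_lt_mul_right (lt_of_le_of_lt hle' hlt) (Nat.zero_le _)
    omega
  have hcop : IsCoprime r.num (r.den : ℤ) := by
    rw [Int.isCoprime_iff_nat_coprime]; simpa using r.reduced
  rcases lt_or_gt_of_ne hΓ0 with hneg | hpos
  · refine ⟨r.den, Γ.natAbs, -r.num, -1, r.pos, by omega, hrn, hγn, hcop.neg_left, Or.inr rfl, ?_⟩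
    have : (Γ.natAbs : ℤ) = -Γ := by omega
    rw [this, hΓ]; ring
  · refine ⟨r.den, Γ.natAbs, r.num, 1, r.pos, by omega, hrn, hγn, hcop, Or.inl rfl, ?_⟩
    have : (Γ.natAbs : ℤ) = Γ := by omega
    rw [this, hΓ]; ring

lemma Dhk_le {h k q γ : ℕ} {p s : ℤ} (hq : 0 < q) (hγ : 0 < γ) (hqk : q < k) (hγk : γ < k)
    (hs : s = 1 ∨ s = -1) (he : s * q * h = p * k + γ) :
    0 < Dhk h k ∧ Dhk h k ≤ q * γ := by
  have hmem : q * γ ∈ {d : ℕ | ∃ p : ℤ × ℤ, Zhk h k p ∧ (p.1 * p.2).natAbs = d} := by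
    refine ⟨(s * q, γ), ⟨?_, ?_, (by omega : (1 : ℤ) ≤ γ), by simpa using hγk, ?_⟩, ?_⟩
    · rcases hs with rfl | rfl <;> simp <;> omega
    · rcases hs with rfl | rfl <;> simp <;> omega
    · change s * q * h ≡ γ [ZMOD k]
      rw [he]
      exact (Int.modEq_iff_dvd.2 ⟨-p, by ring⟩)
    · rcases hs with rfl | rfl <;> simp [Int.natAbs_mul]
  refine ⟨?_, Nat.sInf_le hmem⟩
  obtain ⟨z, hz, hd⟩ := Nat.sInf_mem ⟨_, hmem⟩
  rw [Dhk, ← hd]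
  refine Int.natAbs_pos.2 (mul_ne_zero ?_ ?_)
  · intro h0; have := hz.1; rw [h0] at this; simp at this
  · have := hz.2.2.1; omega

/-! ### Numerical bounds for `ρ = 1 - k⁻³` -/

lemma abs_logKer_le {k : ℕ} (hk : 2 ≤ k) (x : ℝ) :
    |logKer (1 - 1 / (k : ℝ) ^ 3) x| ≤ 3 * Real.log k := by
  have hk2 : (2 : ℝ) ≤ k := by exact_mod_cast hk
  have hk0 : (0 : ℝ) < k := by linarith
  set ρ : ℝ := 1 - 1 / (k : ℝ) ^ 3 with hρ
  have hinv : 1 / (k : ℝ) ^ 3 ≤ 1 := by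
    rw [div_le_one (by positivity)]; exact one_le_pow₀ (by linarith)
  have hinv0 : 0 < 1 / (k : ℝ) ^ 3 := by positivity
  have hρ0 : 0 ≤ ρ := by linarith
  have hlo := ker_ge ρ x hρ0
  have hp := ker_pos hρ0 (by linarith : ρ < 1) x
  have hlo' : ((k : ℝ) ^ 6)⁻¹ ≤ 1 - 2 * ρ * Real.cos x + ρ ^ 2 := by
    refine le_trans (le_of_eq ?_) hlo
    rw [hρ]; field_simp; ring
  have hhi : 1 - 2 * ρ * Real.cos x + ρ ^ 2 ≤ (k : ℝ) ^ 6 := by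
    have h4 : (2 : ℝ) ^ 6 ≤ (k : ℝ) ^ 6 := by gcongr
    nlinarith [Real.neg_one_le_cos x]
  have a := Real.log_le_log (by positivity) hlo'
  have b := Real.log_le_log hp hhi
  rw [Real.log_inv, Real.log_pow] at a
  rw [Real.log_pow] at b
  push_cast at a b
  rw [logKer, abs_le]
  constructor <;> linarith

/-- The bound `Cl₂(π/3)` for the Abel mean that occurs in `block_bound`, with an error `O(1/k)`. -/
lemma abelCl_pow_le {k q : ℕ} (hk : 2 ≤ k) (hq : 0 < q) (hqk : q ≤ k) (θ : ℝ) :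
    ∃ E : ℝ, 0 ≤ E ∧ |abelCl ((1 - 1 / (k : ℝ) ^ 3) ^ q) θ| ≤ Cl2 (π / 3) + E ∧
      k * E ≤ (∑' n : ℕ, 1 / (n : ℝ) ^ (3 / 2 : ℝ)) + 4 := by
  have hk2 : (2 : ℝ) ≤ k := by exact_mod_cast hk
  have hk0 : (0 : ℝ) < k := by linarith
  have hqk' : (q : ℝ) ≤ k := by exact_mod_cast hqk
  have hq0 : (0 : ℝ) < q := by exact_mod_cast hq
  set C := ∑' n : ℕ, 1 / (n : ℝ) ^ (3 / 2 : ℝ) with hC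
  have hC0 : 0 ≤ C := tsum_nonneg fun n => by positivity
  set ρ : ℝ := 1 - 1 / (k : ℝ) ^ 3 with hρ
  have hinv : 1 / (k : ℝ) ^ 3 ≤ 1 / 2 := by
    apply one_div_le_one_div_of_le (by norm_num)
    nlinarith [mul_le_mul hk2 hk2 (by norm_num) hk0.le, pow_pos hk0 3, pow_le_pow_left₀ (by norm_num) hk2 3]
  have hinv0 : 0 < 1 / (k : ℝ) ^ 3 := by positivity
  have hρ0 : 1 / 2 ≤ ρ := by linarith
  have hρ1 : ρ < 1 := by linarith
  set σ := ρ ^ q with hσ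
  have hσ0 : 0 < σ := pow_pos (by linarith) q
  have hσ1 : σ < 1 := pow_lt_one₀ (by linarith) hρ1 hq.ne'
  have hb : 1 - σ ≤ 1 / (k : ℝ) ^ 2 := by
    have h1 := one_add_mul_le_pow (a := ρ - 1) (by linarith) q
    have h2 : 1 + (ρ - 1) = ρ := by ring
    rw [h2] at h1
    have h3 : (q : ℝ) * (1 / (k : ℝ) ^ 3) ≤ k * (1 / (k : ℝ) ^ 3) := by gcongr
    have h4 : (k : ℝ) * (1 / (k : ℝ) ^ 3) = 1 / (k : ℝ) ^ 2 := by field_simp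
    have h5 : ρ - 1 = -(1 / (k : ℝ) ^ 3) := by rw [hρ]; ring
    rw [h5] at h1
    linarith
  have hsq : Real.sqrt (1 - σ) ≤ 1 / k := by
    rw [Real.sqrt_le_left (by positivity)]
    rw [div_pow, one_pow]; exact hb
  have hl0 : 0 ≤ -Real.log σ := by linarith [Real.log_nonpos hσ0.le hσ1.le]
  have hl : -Real.log σ ≤ 2 / (k : ℝ) ^ 2 := by
    rw [hσ, Real.log_pow, ← mul_neg, ← Real.log_inv]
    have h1 := Real.log_le_sub_one_of_pos (inv_pos.2 (by linarith : 0 < ρ))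
    have h2 : ρ⁻¹ - 1 ≤ 2 * (1 / (k : ℝ) ^ 3) := by
      have : ρ⁻¹ - 1 = (1 / (k : ℝ) ^ 3) / ρ := by
        have : ρ ≠ 0 := by linarith
        rw [eq_div_iff this, sub_mul, inv_mul_cancel₀ this, hρ]; ring
      rw [this, div_le_iff₀ (by linarith)]
      nlinarith
    calc (q : ℝ) * Real.log ρ⁻¹ ≤ k * (2 * (1 / (k : ℝ) ^ 3)) :=
          mul_le_mul hqk' (h1.trans h2)
            (Real.log_nonneg ((one_le_inv₀ (by linarith)).2 hρ1.le)) hk0.le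
      _ = _ := by field_simp
  refine ⟨C * Real.sqrt (1 - σ) + π / 2 * (-Real.log σ), ?_, ?_, ?_⟩
  · have := Real.pi_pos; positivity
  · have h1 := abelCl_abs_le hσ0 hσ1 θ
    have h2 := abelCl_sub_Cl2 hσ0 hσ1 (π / 3)
    linarith
  · have h1 : k * (C * Real.sqrt (1 - σ)) ≤ C := by
      calc k * (C * Real.sqrt (1 - σ)) ≤ k * (C * (1 / k)) := by gcongr
        _ = C := by field_simp
    have h2 : k * (π / 2 * (-Real.log σ)) ≤ 4 := by
      calc k * (π / 2 * (-Real.log σ)) ≤ k * (4 / 2 * (2 / (k : ℝ) ^ 2)) := by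
            gcongr
            exact Real.pi_le_four
        _ = 4 / k := by field_simp
        _ ≤ 4 := div_le_self (by norm_num) (by linarith)
    rw [mul_add]; linarith

/-! ### Conclusion -/

theorem stmt7 : ∃ τ : ℝ, ∀ m h k : ℕ, 1 ≤ h → h < k → Nat.gcd h k = 1 → m ≤ k - 1 →
    (1 / (k : ℝ)) * |Real.log (|sineProd ((h : ℝ) / k) m|)| ≤
      Cl2 (π / 3) / (2 * π * (Dhk h k : ℝ)) + τ * Real.log k / Real.sqrt k := by
  set C := ∑' n : ℕ, 1 / (n : ℝ) ^ (3 / 2 : ℝ) with hC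
  have hC0 : 0 ≤ C := tsum_nonneg fun n => by positivity
  refine ⟨11 + 2 * (C + 5), fun m h k hh hhk hc hm => ?_⟩
  have hk : 2 ≤ k := by omega
  have hk2 : (2 : ℝ) ≤ k := by exact_mod_cast hk
  have hk0 : (0 : ℝ) < k := by linarith
  have hpi := Real.pi_pos
  obtain ⟨q, γ, p, s, hq, hγ, hqn, hγn, hp, hs, he⟩ := exists_approx hk hc
  have hnk : Nat.sqrt k < k := Nat.sqrt_lt_self (by omega)
  obtain ⟨hD0, hDle⟩ := Dhk_le hq hγ (by omega) (by omega) hs he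
  have hsqrt : (Nat.sqrt k : ℝ) ≤ Real.sqrt k := Real.nat_sqrt_le_real_sqrt
  have hqs : (q : ℝ) ≤ Real.sqrt k := le_trans (by exact_mod_cast hqn) hsqrt
  have hγs : (γ : ℝ) ≤ Real.sqrt k := le_trans (by exact_mod_cast hγn) hsqrt
  have hq0 : (0 : ℝ) < q := by exact_mod_cast hq
  have hγ0 : (0 : ℝ) < γ := by exact_mod_cast hγ
  have hlog : 1 / 2 ≤ Real.log k := by
    have := Real.log_le_log (by norm_num) hk2
    linarith [Real.log_two_gt_d9]
  have hsq1 : 1 ≤ Real.sqrt k := by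
    rw [Real.one_le_sqrt]; linarith
  set ρ : ℝ := 1 - 1 / (k : ℝ) ^ 3 with hρ
  have hinv : 1 / (k : ℝ) ^ 3 < 1 := by
    rw [div_lt_one (by positivity)]; exact one_lt_pow₀ (by linarith) (by norm_num)
  have hinv0 : 0 < 1 / (k : ℝ) ^ 3 := by positivity
  have hρ0 : 0 ≤ ρ := by linarith
  have hρ1 : ρ < 1 := by linarith
  set f : ℕ → ℝ := fun j => Real.log |2 * Real.sin (π * (j + 1 : ℕ) * ((h : ℝ) / k))| with hf
  set g : ℕ → ℝ := fun j => logKer ρ ((j + 1) * (2 * π * h / k)) with hg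
  have hlogsum : Real.log (|sineProd ((h : ℝ) / k) m|) = ∑ j ∈ Finset.range m, f j := by
    rw [sineProd_eq, Finset.abs_prod, Real.log_prod]
    intro j hj
    have hj' := Finset.mem_range.1 hj
    have := two_sin_ge (j := j + 1) (by omega : 0 < k) hc (by omega) (by omega)
    have : 0 < 1 / (k : ℝ) := by positivity
    linarith
  have hfg : |∑ j ∈ Finset.range m, f j - ∑ j ∈ Finset.range m, g j| ≤ 1 := by
    rw [← Finset.sum_sub_distrib]
    refine (Finset.abs_sum_le_sum_abs _ _).trans ?_
    have hmk : (m : ℝ) ≤ k := by exact_mod_cast (by omega : m ≤ k)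
    calc ∑ j ∈ Finset.range m, |f j - g j| ≤ ∑ j ∈ Finset.range m, 2 / (k : ℝ) ^ 2 := by
          refine Finset.sum_le_sum fun j hj => ?_
          have hj' := Finset.mem_range.1 hj
          have h1 := two_sin_ge (j := j + 1) (by omega : 0 < k) hc (by omega) (by omega)
          have e : π * (j + 1 : ℕ) * ((h : ℝ) / k) = ((j + 1) * (2 * π * h / k)) / 2 := by
            push_cast; ring
          rw [e] at h1
          simp only [hf, hg]
          rw [e]
          exact log_two_sin_sub hk h1
      _ = m * (2 / (k : ℝ) ^ 2) := by simp
      _ ≤ k * (2 / (k : ℝ) ^ 2) := by gcongr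
      _ = 2 / k := by field_simp
      _ ≤ 1 := by rw [div_le_one hk0]; exact hk2
  set M := m / q with hM
  have hmM : q * M + m % q = m := Nat.div_add_mod m q
  have hrem : |∑ j ∈ Finset.range m, g j - ∑ j ∈ Finset.range (q * M), g j|
      ≤ Real.sqrt k * (3 * Real.log k) := by
    conv_lhs => rw [← hmM]
    rw [Finset.sum_range_add, add_sub_cancel_left]
    refine (Finset.abs_sum_le_sum_abs _ _).trans ?_
    calc _ ≤ ∑ j ∈ Finset.range (m % q), 3 * Real.log k :=
          Finset.sum_le_sum fun j _ => abs_logKer_le hk _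
      _ = (m % q : ℕ) * (3 * Real.log k) := by simp
      _ ≤ q * (3 * Real.log k) := by
          have : ((m % q : ℕ) : ℝ) ≤ q := by exact_mod_cast (Nat.mod_lt m hq).le
          gcongr
      _ ≤ _ := by gcongr
  set δ : ℝ := 2 * π * γ / (q * k) with hδ
  have hδ0 : 0 < δ := by positivity
  -- The kernel is even, so the sign `s` does not matter.
  have hgs : ∀ j : ℕ, g j = logKer ρ ((j + 1) * (2 * π * p / q + δ)) := by
    intro j
    have he' : (s : ℝ) * q * h = p * k + γ := by exact_mod_cast he
    have e : 2 * π * p / q + δ = s * (2 * π * h / k) := by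
      rw [hδ]; field_simp; linarith
    rw [e, hg]
    rcases hs with rfl | rfl
    · simp
    · simp only
      rw [← logKer_neg]; congr 1; push_cast; ring
  have hMk : (M : ℝ) * q ≤ k := by
    have : M * q ≤ k := by rw [mul_comm]; omega
    exact_mod_cast this
  have hL : M * (q * δ) ≤ 2 * π * γ / q := by
    rw [hδ, show (M : ℝ) * (q * (2 * π * γ / (q * k))) = (2 * π * γ / q) * ((M * q) / k) by
      field_simp]
    exact mul_le_of_le_one_right (by positivity) ((div_le_one hk0).2 hMk)
  have hblock := block_bound hρ0 hρ1 hq hp hδ0 hL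
  simp only [← hgs] at hblock
  obtain ⟨E, hE0, hE1, hE2⟩ := abelCl_pow_le hk hq (by omega) (q * (M * (q * δ)))
  have hvar : Real.log ((1 + ρ) / (1 - ρ)) ≤ 4 * Real.log k := by
    have h1 : (1 + ρ) / (1 - ρ) ≤ (k : ℝ) ^ 4 := by
      have : 1 - ρ = 1 / (k : ℝ) ^ 3 := by rw [hρ]; ring
      rw [this, div_le_iff₀ hinv0, show (k : ℝ) ^ 4 * (1 / (k : ℝ) ^ 3) = k by field_simp]
      linarith
    have h2 := Real.log_le_log (div_pos (by linarith) (by linarith)) h1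
    rw [Real.log_pow] at h2; push_cast at h2; exact h2
  have hvar' : γ * (2 * Real.log ((1 + ρ) / (1 - ρ))) ≤ Real.sqrt k * (8 * Real.log k) := by
    have h1 : 2 * Real.log ((1 + ρ) / (1 - ρ)) ≤ 8 * Real.log k := by linarith
    calc _ ≤ γ * (8 * Real.log k) := by gcongr
      _ ≤ _ := by gcongr
  have hD0' : (1 : ℝ) ≤ Dhk h k := by exact_mod_cast hD0
  have hDle' : (Dhk h k : ℝ) ≤ q * γ := by exact_mod_cast hDle
  have hmain : |abelCl (ρ ^ q) (q * (M * (q * δ)))| / (q * (q * δ))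
      ≤ k * (Cl2 (π / 3) / (2 * π * Dhk h k)) + (C + 4) := by
    -- `Cl₂(π/3) + E` bounds an absolute value, so it is nonnegative and `qγ` may be lowered to `D`.
    have hden : q * (q * δ) = 2 * π * (q * γ) / k := by rw [hδ]; field_simp
    have hnn : 0 ≤ Cl2 (π / 3) + E := (abs_nonneg _).trans hE1
    calc _ ≤ (Cl2 (π / 3) + E) / (2 * π * Dhk h k / k) := by
          rw [hden]; gcongr
      _ = k * (Cl2 (π / 3) / (2 * π * Dhk h k)) + (k * E) / (2 * π * Dhk h k) := by
          field_simp
      _ ≤ _ := by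
          have h1 : (1 : ℝ) ≤ 2 * π * Dhk h k := by nlinarith [Real.pi_gt_three]
          have := div_le_self (mul_nonneg hk0.le hE0) h1
          linarith
  have htotal : |∑ j ∈ Finset.range m, f j| ≤ k * (Cl2 (π / 3) / (2 * π * Dhk h k))
      + (11 + 2 * (C + 5)) * (Real.sqrt k * Real.log k) := by
    have t1 := abs_sub_abs_le_abs_sub (∑ j ∈ Finset.range m, f j) (∑ j ∈ Finset.range m, g j)
    have t2 := abs_sub_abs_le_abs_sub (∑ j ∈ Finset.range m, g j)
      (∑ j ∈ Finset.range (q * M), g j)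
    have t3 : C + 5 ≤ 2 * (C + 5) * (Real.sqrt k * Real.log k) := by
      have h1 : 1 * (1 / 2) ≤ Real.sqrt k * Real.log k :=
        mul_le_mul hsq1 hlog (by norm_num) (by linarith)
      have h2 := mul_le_mul_of_nonneg_left h1 (show 0 ≤ 2 * (C + 5) by linarith)
      linarith
    linarith
  rw [hlogsum]
  have hss : Real.sqrt k * Real.sqrt k = k := Real.mul_self_sqrt hk0.le
  have hsne : Real.sqrt k ≠ 0 := by linarith
  calc 1 / (k : ℝ) * |∑ j ∈ Finset.range m, f j|
      ≤ 1 / (k : ℝ) * (k * (Cl2 (π / 3) / (2 * π * Dhk h k))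
      + (11 + 2 * (C + 5)) * (Real.sqrt k * Real.log k)) := by gcongr
    _ = Cl2 (π / 3) / (2 * π * Dhk h k)
      + (11 + 2 * (C + 5)) * Real.log k * (Real.sqrt k / k) := by field_simp
    _ = _ := by
      have : Real.sqrt k / k = 1 / Real.sqrt k := by
        rw [div_eq_div_iff hk0.ne' hsne, hss, one_mul]
      rw [this]; ring
end

section
/- There exists an absolute constant C such that for all integers h, k, m with 1 ≤ h < k, gcd(h,k) = 1 and 0 ≤ m < k: | Σ_{j=1}^m ( -log|2 sin(π j h/k)| ) − (k/(2π))·S(m;h,k) | ≤ C·(log k)². -/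
/-!
Write `-log |2 sin (π x)| = ∑ cos (2π n x) / n` and truncate at `n < k`. At `x = j h / k` the tail is
at most `1 / (k |sin (π j h / k)|)` (`abs_neg_log_sub_sum_cos_le`), and since `j ↦ j h mod k` permutes
the nonzero residues, these errors add up to at most `1 + log k` (`abs_sum_log_sub_le`).

In the truncated double sum, the sum over `j ≤ m` of `cos (2π j γ / k)`, with `γ = b h mod k`, equals
`sin (2π m γ / k) cot (π γ / k) / 2 + O(1)` (`sum_cos_eq`). Replacing `cot (π x)` by
`(1/x - 1/(1-x)) / π` costs another `O(1)` (`abs_cot_sub_two_poles_le`), and the two poles are the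
contributions of `(b, γ)` and `(-b, k - γ)` to `(k / 2π) S(m;h,k)` (`S_eq`). Weighted by `1 / b`
these errors again sum to `O(log k)` (`abs_sum_sub_le`). The total error is thus `O(log k)`, which is
`O((log k)²)` because `k ≥ 2`.
-/

open scoped Real Classical

/-- The finite set of pairs `Z(h,k) = {(β,γ) : 1 ≤ |β| < k, 1 ≤ γ < k, βh ≡ γ (mod k)}`. -/
noncomputable def ZhkFinset (h k : ℕ) : Finset (ℤ × ℤ) :=
  (Finset.Icc (-(k : ℤ)) (k : ℤ) ×ˢ Finset.Icc 1 ((k : ℤ) - 1)).filter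
    (fun p => 1 ≤ |p.1| ∧ |p.1| < (k : ℤ) ∧ p.1 * (h : ℤ) ≡ p.2 [ZMOD (k : ℤ)])

/-- `S(m;h,k) = Σ_{(β,γ) ∈ Z(h,k)} sin(2πmγ/k)/|βγ|`. -/
noncomputable def S (m h k : ℕ) : ℝ :=
  ∑ p ∈ ZhkFinset h k, Real.sin (2 * π * m * (p.2 : ℝ) / k) / |(p.1 : ℝ) * (p.2 : ℝ)|

/-! ### The truncated Fourier series of the log-sine -/

/-- Tail bound for the logarithmic series on the unit circle. Along the segment `t ↦ t z`, the
remainder has derivative `-z (t z)^(k-1) / (1 - t z)`, and `‖1 - z‖ ≤ 2 ‖1 - t z‖`, so its norm is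
dominated by `2 t^k / (k ‖1 - z‖)`. No convergence at the boundary is needed. -/
lemma norm_log_one_sub_add_sum_le (k : ℕ) (hk : 1 ≤ k) (z : ℂ) (hz : ‖z‖ = 1) (hz1 : z ≠ 1) :
    ‖Complex.log (1 - z) + ∑ n ∈ Finset.Icc 1 (k - 1), z ^ n / n‖ ≤ 2 / (k * ‖1 - z‖) := by
  have hpos : 0 < ‖1 - z‖ := norm_pos_iff.mpr (sub_ne_zero.mpr hz1.symm)
  have hre : z.re < 1 := by
    have h1 : z.re ≤ 1 := hz ▸ Complex.re_le_norm z
    refine lt_of_le_of_ne h1 fun h => hz1 ?_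
    have h2 : z.re * z.re + z.im * z.im = 1 := by
      rw [← Complex.normSq_apply, Complex.normSq_eq_norm_sq, hz]; norm_num
    have h3 : z.im = 0 := by
      rw [h] at h2; nlinarith [mul_self_nonneg z.im]
    exact Complex.ext (by simpa using h) (by simpa using h3)
  have hslit : ∀ t ∈ Set.Icc (0 : ℝ) 1, (1 - (t : ℂ) * z) ∈ Complex.slitPlane := by
    rintro t ⟨h0, h1⟩
    left
    simp only [Complex.sub_re, Complex.one_re, Complex.re_ofReal_mul]
    rcases le_or_gt z.re 0 with h | h <;> nlinarith
  set g : ℝ → ℂ := fun t => Complex.log (1 - (t : ℂ) * z)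
    + ∑ n ∈ Finset.Icc 1 (k - 1), ((t : ℂ) * z) ^ n / n with hg
  have hderiv : ∀ t ∈ Set.Icc (0 : ℝ) 1,
      HasDerivAt g (-(z * ((t : ℂ) * z) ^ (k - 1) / (1 - (t : ℂ) * z))) t := by
    intro t ht
    have hlin : HasDerivAt (fun s : ℝ => (s : ℂ) * z) z t := by
      simpa using (HasDerivAt.ofReal_comp (hasDerivAt_id t)).mul_const z
    have hl : HasDerivAt (fun s : ℝ => Complex.log (1 - (s : ℂ) * z))
        (-z / (1 - (t : ℂ) * z)) t :=
      HasDerivAt.clog_real (by simpa using hlin.const_sub 1) (hslit t ht)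
    have hs : HasDerivAt (fun s : ℝ => ∑ n ∈ Finset.Icc 1 (k - 1), ((s : ℂ) * z) ^ n / n)
        (∑ n ∈ Finset.Icc 1 (k - 1), z * ((t : ℂ) * z) ^ (n - 1)) t := by
      refine HasDerivAt.fun_sum fun n hn => ?_
      have hn0 : (n : ℂ) ≠ 0 := by
        have := (Finset.mem_Icc.mp hn).1
        exact_mod_cast (by omega : n ≠ 0)
      refine ((hlin.fun_pow n).div_const (n : ℂ)).congr_deriv ?_
      field_simp
    have hne : (1 - (t : ℂ) * z) ≠ 0 := Complex.slitPlane_ne_zero (hslit t ht)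
    refine (hl.fun_add hs).congr_deriv ?_
    have hgeom : ∑ n ∈ Finset.Icc 1 (k - 1), z * ((t : ℂ) * z) ^ (n - 1)
        = z * ∑ n ∈ Finset.range (k - 1), ((t : ℂ) * z) ^ n := by
      rw [← Finset.mul_sum, ← Finset.Ico_add_one_right_eq_Icc, Finset.sum_Ico_eq_sum_range]
      simp
    have hG := mul_neg_geom_sum ((t : ℂ) * z) (k - 1)
    have hpow : ((t : ℂ) * z) ^ (k - 1)
        = 1 - (1 - (t : ℂ) * z) * ∑ n ∈ Finset.range (k - 1), ((t : ℂ) * z) ^ n := by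
      rw [hG]; ring
    rw [hgeom, hpow]
    generalize ∑ n ∈ Finset.range (k - 1), ((t : ℂ) * z) ^ n = G
    generalize 1 - (t : ℂ) * z = w at hne ⊢
    field_simp
    ring
  have hlow : ∀ t ∈ Set.Icc (0 : ℝ) 1, ‖1 - z‖ ≤ 2 * ‖1 - (t : ℂ) * z‖ := by
    rintro t ⟨h0, h1⟩
    have e : (1 : ℂ) - z = (1 - t * z) + -((1 - t : ℝ) : ℂ) * z := by push_cast; ring
    have n1 : ‖-((1 - t : ℝ) : ℂ) * z‖ = 1 - t := by
      rw [norm_mul, hz, norm_neg, Complex.norm_real, Real.norm_of_nonneg (by linarith), mul_one]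
    have n2 : 1 - t ≤ ‖1 - (t : ℂ) * z‖ := by
      have := norm_sub_norm_le (1 : ℂ) ((t : ℂ) * z)
      rwa [norm_one, norm_mul, hz, Complex.norm_real, Real.norm_of_nonneg h0, mul_one] at this
    have := norm_add_le (1 - (t : ℂ) * z) (-((1 - t : ℝ) : ℂ) * z)
    rw [← e, n1] at this
    linarith
  have key := image_norm_le_of_norm_deriv_right_le_deriv_boundary
    (f := g) (f' := fun t => -(z * ((t : ℂ) * z) ^ (k - 1) / (1 - (t : ℂ) * z))) (a := 0) (b := 1)
    (B := fun t => 2 * t ^ k / (k * ‖1 - z‖)) (B' := fun t => 2 * t ^ (k - 1) / ‖1 - z‖)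
    (fun t ht => (hderiv t ht).continuousAt.continuousWithinAt)
    (fun t ht => (hderiv t (Set.Ico_subset_Icc_self ht)).hasDerivWithinAt)
    (by
      have : ∑ n ∈ Finset.Icc 1 (k - 1), ((0 : ℂ) * z) ^ n / n = 0 :=
        Finset.sum_eq_zero fun n hn => by
          have := (Finset.mem_Icc.mp hn).1
          rw [zero_mul, zero_pow (by omega), zero_div]
      simp only [hg, Complex.ofReal_zero, this]
      simp
      positivity)
    (fun t => by
      have hk0 : (k : ℝ) ≠ 0 := by exact_mod_cast (by omega : k ≠ 0)
      refine (((hasDerivAt_pow k t).const_mul 2).div_const (k * ‖1 - z‖)).congr_deriv ?_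
      field_simp)
    (fun t ht => by
      have ht' := Set.Ico_subset_Icc_self ht
      have h1 := hlow t ht'
      have hp : 0 < ‖1 - (t : ℂ) * z‖ := by linarith
      rw [norm_neg, norm_div, norm_mul, norm_pow, norm_mul, hz, Complex.norm_real,
        Real.norm_of_nonneg ht.1, one_mul, mul_one, div_le_div_iff₀ hp hpos]
      have := mul_le_mul_of_nonneg_left h1 (pow_nonneg ht.1 (k - 1))
      linarith)
    (Set.right_mem_Icc.mpr zero_le_one)
  simpa [hg] using key

/-- Truncated Fourier expansion of `-log |2 sin (θ/2)|`: the real part of the bound for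
`log (1 - z)` at `z = exp (iθ)`. -/
lemma abs_neg_log_sub_sum_cos_le (k : ℕ) (hk : 1 ≤ k) (θ : ℝ) (hθ : Real.sin (θ / 2) ≠ 0) :
    |-Real.log |2 * Real.sin (θ / 2)| - ∑ n ∈ Finset.Icc 1 (k - 1), Real.cos (n * θ) / n|
      ≤ 1 / (k * |Real.sin (θ / 2)|) := by
  set z : ℂ := Complex.exp (Complex.I * θ) with hzdef
  have hn : ‖1 - z‖ = |2 * Real.sin (θ / 2)| := by
    rw [norm_sub_rev, hzdef, Complex.norm_exp_I_mul_ofReal_sub_one, Real.norm_eq_abs]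
  have hz : ‖z‖ = 1 := by rw [hzdef, mul_comm, Complex.norm_exp_ofReal_mul_I]
  have hz1 : z ≠ 1 := by
    intro h
    rw [h, sub_self, norm_zero] at hn
    have := abs_eq_zero.mp hn.symm
    exact hθ (by linarith)
  have h := (Complex.abs_re_le_norm _).trans (norm_log_one_sub_add_sum_le k hk z hz hz1)
  have hs : (∑ n ∈ Finset.Icc 1 (k - 1), z ^ n / n).re
      = ∑ n ∈ Finset.Icc 1 (k - 1), Real.cos (n * θ) / n := by
    rw [Complex.re_sum]
    refine Finset.sum_congr rfl fun n _ => ?_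
    rw [hzdef, ← Complex.exp_nat_mul, Complex.div_natCast_re,
      show (n : ℂ) * (Complex.I * θ) = ((n * θ : ℝ) : ℂ) * Complex.I by push_cast; ring,
      Complex.exp_ofReal_mul_I_re]
  rw [Complex.add_re, Complex.log_re, hs, hn] at h
  rw [← abs_neg, neg_sub, sub_neg_eq_add, add_comm]
  refine h.trans (le_of_eq ?_)
  rw [abs_mul, abs_two]
  have : |Real.sin (θ / 2)| ≠ 0 := abs_ne_zero.mpr hθ
  have hk0 : (k : ℝ) ≠ 0 := by exact_mod_cast (by omega : k ≠ 0)
  field_simp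

/-! ### Cosine sums and the cotangent -/

lemma sum_cos_eq (φ : ℝ) (hφ : Real.sin (φ / 2) ≠ 0) (m : ℕ) :
    ∑ j ∈ Finset.Icc 1 m, Real.cos (j * φ)
      = Real.sin (m * φ) * (Real.cos (φ / 2) / Real.sin (φ / 2)) / 2
        + (Real.cos (m * φ) - 1) / 2 := by
  induction m with
  | zero => simp
  | succ m ih =>
    rw [Finset.sum_Icc_succ_top (by omega), ih]
    have e : ((m + 1 : ℕ) : ℝ) * φ = m * φ + (φ / 2 + φ / 2) := by push_cast; ring
    rw [e, Real.sin_add, Real.cos_add, Real.sin_add, Real.cos_add]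
    have := Real.sin_sq_add_cos_sq (φ / 2)
    field_simp
    generalize Real.sin (φ / 2) = s at *
    generalize Real.cos (φ / 2) = c at *
    have hc : c ^ 2 = 1 - s ^ 2 := by linarith
    ring_nf
    simp only [show c ^ 3 = c * c ^ 2 by ring, hc]
    ring

lemma abs_cot_sub_inv_le (y : ℝ) (h0 : 0 < y) (h1 : y ≤ π / 2) :
    |Real.cos y / Real.sin y - 1 / y| ≤ π ^ 2 / 8 := by
  have hs : 2 / π * y ≤ Real.sin y := Real.mul_le_sin h0.le h1
  have hsp : 0 < Real.sin y := lt_of_lt_of_le (by positivity) hs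
  have hup : y * Real.cos y ≤ Real.sin y := by
    rcases h1.eq_or_lt with h | h
    · rw [h, Real.cos_pi_div_two, Real.sin_pi_div_two]; norm_num
    · have hc : 0 < Real.cos y := Real.cos_pos_of_mem_Ioo ⟨by linarith, h⟩
      have := Real.lt_tan h0 h
      rw [Real.tan_eq_sin_div_cos, lt_div_iff₀ hc] at this
      exact this.le
  have hlo : Real.sin y - y * Real.cos y ≤ y ^ 3 / 2 := by
    have a := Real.sin_le h0.le
    have b := mul_le_mul_of_nonneg_left (Real.one_sub_sq_div_two_le_cos (x := y)) h0.le
    nlinarith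
  have e : Real.cos y / Real.sin y - 1 / y
      = -((Real.sin y - y * Real.cos y) / (y * Real.sin y)) := by
    field_simp; ring
  rw [e, abs_neg, abs_of_nonneg (div_nonneg (by linarith) (by positivity)),
    div_le_iff₀ (by positivity)]
  have e2 : π ^ 2 / 8 * (y * (2 / π * y)) = y ^ 2 / 2 * (π / 2) := by field_simp; ring
  have h3 : π ^ 2 / 8 * (y * (2 / π * y)) ≤ π ^ 2 / 8 * (y * Real.sin y) := by gcongr
  have h4 : y ^ 2 / 2 * y ≤ y ^ 2 / 2 * (π / 2) := by gcongr
  nlinarith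

lemma abs_cot_sub_two_poles_le_of_le_half (x : ℝ) (h0 : 0 < x) (h1 : x ≤ 1 / 2) :
    |Real.cos (π * x) / Real.sin (π * x) - (1 / x - 1 / (1 - x)) / π| ≤ 2 := by
  have hpi := Real.pi_pos
  have h := abs_cot_sub_inv_le (π * x) (by positivity) (by nlinarith)
  have e : Real.cos (π * x) / Real.sin (π * x) - (1 / x - 1 / (1 - x)) / π
      = (Real.cos (π * x) / Real.sin (π * x) - 1 / (π * x)) + 1 / (1 - x) / π := by
    rw [show 1 / (π * x) = 1 / x / π by field_simp]; ring
  have h2 : 1 / (1 - x) ≤ 2 := by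
    rw [div_le_iff₀ (by linarith)]; linarith
  have h3 : 0 ≤ 1 / (1 - x) / π := div_nonneg (div_nonneg zero_le_one (by linarith)) hpi.le
  have h4 : 1 / (1 - x) / π ≤ 2 / 3 := by
    rw [div_le_iff₀ hpi]; linarith [Real.pi_gt_three]
  rw [e]
  refine (abs_add_le _ _).trans ?_
  rw [abs_of_nonneg h3]
  nlinarith [Real.pi_lt_d2]

/-- On `(0, 1)` the cotangent `cot (π x)` differs boundedly from its two poles at `0` and `1`. -/
lemma abs_cot_sub_two_poles_le (x : ℝ) (h0 : 0 < x) (h1 : x < 1) :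
    |Real.cos (π * x) / Real.sin (π * x) - (1 / x - 1 / (1 - x)) / π| ≤ 2 := by
  rcases le_total x (1 / 2) with h | h
  · exact abs_cot_sub_two_poles_le_of_le_half x h0 h
  · have := abs_cot_sub_two_poles_le_of_le_half (1 - x) (by linarith) (by linarith)
    rw [show π * (1 - x) = π - π * x by ring, Real.cos_pi_sub, Real.sin_pi_sub,
      sub_sub_cancel, ← abs_neg] at this
    convert this using 2
    ring

/-! ### Harmonic sums and residues modulo `k` -/

lemma sum_inv_le (k : ℕ) (hk : 2 ≤ k) :
    ∑ b ∈ Finset.Icc 1 (k - 1), (1 : ℝ) / b ≤ 1 + Real.log k := by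
  have h := harmonic_le_one_add_log (k - 1)
  rw [harmonic_eq_sum_Icc] at h
  push_cast at h
  simp only [one_div]
  refine h.trans ?_
  have : Real.log ((k - 1 : ℕ) : ℝ) ≤ Real.log k :=
    Real.log_le_log (by exact_mod_cast (by omega : 0 < k - 1)) (by exact_mod_cast (by omega))
  linarith

lemma one_div_mul_sin_le (k r : ℕ) (h0 : 1 ≤ r) (h1 : r < k) :
    1 / (k * |Real.sin (π * r / k)|) ≤ (1 / (r : ℝ) + 1 / ((k - r : ℕ) : ℝ)) / 2 := by
  have hpi := Real.pi_pos
  have hr : (0 : ℝ) < r := by exact_mod_cast h0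
  have hkr : (r : ℝ) < k := by exact_mod_cast h1
  have hk : (0 : ℝ) < k := hr.trans hkr
  rw [Nat.cast_sub h1.le]
  have aux : ∀ u : ℝ, 0 < u → u ≤ k / 2 → 1 / (k * |Real.sin (π * u / k)|) ≤ 1 / u / 2 := by
    intro u hu huk
    have hs := Real.mul_le_sin (x := π * u / k) (by positivity)
      (by rw [div_le_iff₀ hk]; nlinarith)
    have e : 2 / π * (π * u / k) = 2 * u / k := by field_simp
    rw [e] at hs
    have h2 : 0 < 2 * u / k := by positivity
    rw [abs_of_pos (h2.trans_le hs), div_div]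
    apply one_div_le_one_div_of_le (by positivity)
    rw [div_le_iff₀ hk] at hs
    linarith
  have p1 : 0 < 1 / (r : ℝ) := by positivity
  have p2 : 0 < 1 / ((k : ℝ) - r) := one_div_pos.mpr (by linarith)
  rcases le_total (r : ℝ) (k / 2) with h | h
  · linarith [aux r hr h]
  · have := aux (k - r) (by linarith) (by linarith)
    rw [show π * ((k : ℝ) - r) / k = π - π * r / k by field_simp, Real.sin_pi_sub] at this
    linarith

lemma mul_mod_mem {h k b : ℕ} (hc : Nat.gcd h k = 1) (hb : b ∈ Finset.Icc 1 (k - 1)) :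
    b * h % k ∈ Finset.Icc 1 (k - 1) := by
  rw [Finset.mem_Icc] at *
  have hlt := Nat.mod_lt (b * h) (by omega : k > 0)
  have hne : b * h % k ≠ 0 := fun h0 => by
    have h1 : k ∣ b := Nat.Coprime.dvd_of_dvd_mul_right (Nat.Coprime.symm hc)
      (Nat.dvd_of_mod_eq_zero h0)
    have := Nat.le_of_dvd (by omega) h1
    omega
  omega

/-- Multiplication by the unit `h` permutes the nonzero residues modulo `k`. -/
lemma sum_mul_mod {h k : ℕ} (hc : Nat.gcd h k = 1) (F : ℕ → ℝ) :
    ∑ b ∈ Finset.Icc 1 (k - 1), F (b * h % k) = ∑ r ∈ Finset.Icc 1 (k - 1), F r := by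
  have hinj : Set.InjOn (fun b => b * h % k) (Finset.Icc 1 (k - 1) : Finset ℕ) := by
    intro a ha b hb hab
    have ha' := Finset.mem_Icc.mp ha
    have hb' := Finset.mem_Icc.mp hb
    have : a ≡ b [MOD k] := Nat.ModEq.cancel_right_of_coprime (by rwa [Nat.gcd_comm]) hab
    exact Nat.ModEq.eq_of_lt_of_lt this (by omega) (by omega)
  have himg : (Finset.Icc 1 (k - 1)).image (fun b => b * h % k) = Finset.Icc 1 (k - 1) :=
    Finset.eq_of_subset_of_card_le
      (Finset.image_subset_iff.mpr fun b hb => mul_mod_mem hc hb)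
      (Finset.card_image_of_injOn hinj).ge
  conv_rhs => rw [← himg, Finset.sum_image hinj]

lemma div_eq_mod_div (N k : ℕ) (hk : 0 < k) :
    (N : ℝ) / k = ((N % k : ℕ) : ℝ) / k + ((N / k : ℕ) : ℝ) := by
  have hk' : (k : ℝ) ≠ 0 := by exact_mod_cast hk.ne'
  have : (N : ℝ) = ((N % k : ℕ) : ℝ) + k * ((N / k : ℕ) : ℝ) := by
    exact_mod_cast (Nat.mod_add_div N k).symm
  rw [this]; field_simp

lemma abs_sin_mod (N k : ℕ) (hk : 0 < k) :
    |Real.sin (π * N / k)| = |Real.sin (π * (N % k : ℕ) / k)| := by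
  rw [mul_div_assoc, div_eq_mod_div N k hk, mul_add, mul_comm π ((N / k : ℕ) : ℝ),
    Real.sin_add_nat_mul_pi, abs_mul, abs_pow, abs_neg, abs_one, one_pow, one_mul, mul_div_assoc]

lemma cos_mod (j N k : ℕ) (hk : 0 < k) :
    Real.cos (j * (2 * π * N / k)) = Real.cos (j * (2 * π * (N % k : ℕ) / k)) := by
  rw [mul_div_assoc, div_eq_mod_div N k hk,
    show (j : ℝ) * (2 * π * (((N % k : ℕ) : ℝ) / k + ((N / k : ℕ) : ℝ)))
      = j * (2 * π * (N % k : ℕ) / k) + ((j * (N / k) : ℕ) : ℝ) * (2 * π) by push_cast; ring,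
    Real.cos_add_nat_mul_two_pi]

/-! ### The sum over `Z(h,k)` and the two error bounds -/

/-- Each `b` with `1 ≤ b < k` gives exactly two elements of `Z(h,k)`: `(b, γ)` and `(-b, k - γ)`,
where `γ` is the residue of `b h` modulo `k`. -/
lemma sum_ZhkFinset {h k : ℕ} (hc : Nat.gcd h k = 1) (F : ℤ × ℤ → ℝ) :
    ∑ p ∈ ZhkFinset h k, F p
      = ∑ b ∈ Finset.Icc 1 (k - 1), (F ((b : ℤ), ((b * h % k : ℕ) : ℤ))
          + F (-(b : ℤ), (k : ℤ) - ((b * h % k : ℕ) : ℤ))) := by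
  rw [Finset.sum_add_distrib,
    ← Finset.sum_filter_add_sum_filter_not (ZhkFinset h k) (fun p => 0 < p.1)]
  have hcong : ∀ b : ℕ, ((b : ℤ) * h) ≡ ((b * h % k : ℕ) : ℤ) [ZMOD k] := fun b => by
    push_cast
    exact (Int.mod_modEq _ _).symm
  have huniq : ∀ x y : ℤ, 0 < x → x < k → 0 < y → y < k → x ≡ y [ZMOD k] → x = y := by
    intro x y hx hxk hy hyk hxy
    have := hxy.eq
    rwa [Int.emod_eq_of_lt hx.le hxk, Int.emod_eq_of_lt hy.le hyk] at this
  congr 1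
  · symm
    refine Finset.sum_bij (fun b _ => ((b : ℤ), ((b * h % k : ℕ) : ℤ))) ?_ ?_ ?_ (fun _ _ => rfl)
    · intro b hb
      have hγ := Finset.mem_Icc.mp (mul_mod_mem hc hb)
      have hb' := Finset.mem_Icc.mp hb
      have habs : |(b : ℤ)| = b := abs_of_nonneg (by positivity)
      have := hcong b
      simp only [ZhkFinset, Finset.mem_filter, Finset.mem_product, Finset.mem_Icc, habs]
      refine ⟨⟨⟨⟨?_, ?_⟩, ?_, ?_⟩, ?_, ?_, this⟩, ?_⟩ <;> omega
    · intro a _ b _ hab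
      have := (Prod.ext_iff.mp hab).1
      simp only at this
      omega
    · rintro ⟨β, γ⟩ hp
      simp only [ZhkFinset, Finset.mem_filter, Finset.mem_product, Finset.mem_Icc] at hp
      obtain ⟨⟨⟨-, h1, h2⟩, -, h4, h5⟩, h6⟩ := hp
      rw [abs_of_pos h6] at h4
      lift β to ℕ using h6.le
      have hb : β ∈ Finset.Icc 1 (k - 1) := by rw [Finset.mem_Icc]; omega
      have hγ := Finset.mem_Icc.mp (mul_mod_mem hc hb)
      refine ⟨β, hb, Prod.ext rfl ?_⟩
      exact huniq _ _ (by omega) (by omega) (by omega) (by omega) ((hcong β).symm.trans h5)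
  · symm
    have hneg : ∀ b : ℕ, (-(b : ℤ) * h) ≡ (k : ℤ) - ((b * h % k : ℕ) : ℤ) [ZMOD k] := fun b => by
      have h1 := (hcong b).neg
      rw [← neg_mul] at h1
      refine h1.trans ?_
      rw [sub_eq_neg_add]
      exact (Int.modEq_iff_dvd.mpr (by simp))
    refine Finset.sum_bij (fun b _ => (-(b : ℤ), (k : ℤ) - ((b * h % k : ℕ) : ℤ))) ?_ ?_ ?_
      (fun _ _ => rfl)
    · intro b hb
      have hγ := Finset.mem_Icc.mp (mul_mod_mem hc hb)
      have hb' := Finset.mem_Icc.mp hb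
      have habs : |-(b : ℤ)| = b := by rw [abs_neg]; exact abs_of_nonneg (by positivity)
      have := hneg b
      simp only [ZhkFinset, Finset.mem_filter, Finset.mem_product, Finset.mem_Icc, habs]
      refine ⟨⟨⟨⟨?_, ?_⟩, ?_, ?_⟩, ?_, ?_, this⟩, ?_⟩ <;> omega
    · intro a _ b _ hab
      have := (Prod.ext_iff.mp hab).1
      simp only at this
      omega
    · rintro ⟨β, γ⟩ hp
      simp only [ZhkFinset, Finset.mem_filter, Finset.mem_product, Finset.mem_Icc] at hp
      obtain ⟨⟨⟨-, h1, h2⟩, h3, h4, h5⟩, h6⟩ := hp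
      obtain ⟨b, rfl⟩ : ∃ b : ℕ, β = -(b : ℤ) := ⟨(-β).toNat, by omega⟩
      rw [abs_neg, abs_of_nonneg (by positivity)] at h3 h4
      have hb : b ∈ Finset.Icc 1 (k - 1) := by rw [Finset.mem_Icc]; omega
      have hγ := Finset.mem_Icc.mp (mul_mod_mem hc hb)
      refine ⟨b, hb, Prod.ext rfl ?_⟩
      exact huniq _ _ (by omega) (by omega) (by omega) (by omega) ((hneg b).symm.trans h5)

/-- Pairing `β` with `-β` merges the two terms into the sine times the two-pole approximation of
`cot (π γ / k)`. -/
lemma S_eq {h k : ℕ} (m : ℕ) (hc : Nat.gcd h k = 1) :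
    (k : ℝ) / (2 * π) * S m h k = ∑ b ∈ Finset.Icc 1 (k - 1), 1 / (b : ℝ) *
      (Real.sin (m * (2 * π * (b * h % k : ℕ) / k))
        * ((1 / (((b * h % k : ℕ) : ℝ) / k) - 1 / (1 - ((b * h % k : ℕ) : ℝ) / k)) / π) / 2) := by
  rw [S, sum_ZhkFinset hc, Finset.mul_sum]
  refine Finset.sum_congr rfl fun b hb => ?_
  have hγ := Finset.mem_Icc.mp (mul_mod_mem hc hb)
  have hb' := Finset.mem_Icc.mp hb
  generalize b * h % k = g at *
  have hg : (0 : ℝ) < g := by exact_mod_cast hγ.1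
  have hgk : (0 : ℝ) < k - g := by
    have : (g : ℝ) < k := by exact_mod_cast (by omega : g < k)
    linarith
  have hb0 : (0 : ℝ) < b := by exact_mod_cast hb'.1
  have hk : (0 : ℝ) < k := by linarith
  push_cast
  have hsin : Real.sin (2 * π * m * ((k : ℝ) - g) / k) = -Real.sin (2 * π * m * g / k) := by
    rw [show 2 * π * m * ((k : ℝ) - g) / k = (m : ℝ) * (2 * π) - 2 * π * m * g / k by field_simp,
      Real.sin_nat_mul_two_pi_sub]
  rw [hsin, abs_of_pos (mul_pos hb0 hg), neg_mul, abs_neg, abs_of_pos (mul_pos hb0 hgk),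
    show (m : ℝ) * (2 * π * g / k) = 2 * π * m * g / k by ring,
    show 1 - (g : ℝ) / k = (k - g) / k by field_simp]
  have := hgk.ne'
  have := Real.pi_pos.ne'
  field_simp
  ring

/-- The truncated Fourier sum agrees with the main term up to `O(log k)`: each frequency `b`
contributes a bounded error with weight `1 / b`. -/
lemma abs_sum_sub_le {h k : ℕ} (m : ℕ) (hk : 2 ≤ k) (hc : Nat.gcd h k = 1) :
    |(∑ b ∈ Finset.Icc 1 (k - 1), 1 / (b : ℝ)
        * ∑ j ∈ Finset.Icc 1 m, Real.cos (j * (2 * π * (b * h % k : ℕ) / k)))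
      - (k : ℝ) / (2 * π) * S m h k| ≤ 2 * (1 + Real.log k) := by
  rw [S_eq m hc, ← Finset.sum_sub_distrib]
  refine (Finset.abs_sum_le_sum_abs _ _).trans ?_
  refine le_trans ?_ (mul_le_mul_of_nonneg_left (sum_inv_le k hk) zero_le_two)
  rw [Finset.mul_sum]
  refine Finset.sum_le_sum fun b hb => ?_
  have hγ := Finset.mem_Icc.mp (mul_mod_mem hc hb)
  generalize b * h % k = g at *
  have hg : (0 : ℝ) < g := by exact_mod_cast hγ.1
  have hgk : (g : ℝ) < k := by exact_mod_cast (by omega : g < k)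
  have hk0 : (0 : ℝ) < k := by linarith
  have hx0 : 0 < (g : ℝ) / k := by positivity
  have hx1 : (g : ℝ) / k < 1 := (div_lt_one hk0).mpr hgk
  have half : 2 * π * g / k / 2 = π * (g / k) := by ring
  have hs : Real.sin (2 * π * g / k / 2) ≠ 0 := by
    rw [half]
    exact (Real.sin_pos_of_pos_of_lt_pi (by positivity) (by nlinarith [Real.pi_pos])).ne'
  rw [← mul_sub, abs_mul, abs_of_nonneg (by positivity : (0 : ℝ) ≤ 1 / b), mul_comm]
  refine mul_le_mul_of_nonneg_right ?_ (by positivity)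
  rw [sum_cos_eq _ hs, half]
  have hD := abs_cot_sub_two_poles_le _ hx0 hx1
  have hsin := Real.abs_sin_le_one (m * (2 * π * g / k))
  have hcos := Real.neg_one_le_cos (m * (2 * π * g / k))
  have hcos' := Real.cos_le_one (m * (2 * π * g / k))
  generalize Real.cos (π * (g / k)) / Real.sin (π * (g / k)) = u at *
  generalize (1 / ((g : ℝ) / k) - 1 / (1 - (g : ℝ) / k)) / π = v at *
  generalize Real.sin (m * (2 * π * g / k)) = s at *
  generalize Real.cos (m * (2 * π * g / k)) = c at *
  have h1 : |s * (u - v)| ≤ 1 * 2 := by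
    rw [abs_mul]
    exact mul_le_mul hsin hD (abs_nonneg _) zero_le_one
  rw [abs_le] at h1 ⊢
  constructor <;> linarith [h1.1, h1.2]

/-- Truncating the Fourier series at frequency `k` costs `O(log k)` in total: the truncation
errors `1 / (k |sin (π j h / k)|)`, summed over all nonzero residues, are bounded by a harmonic
sum. -/
lemma abs_sum_log_sub_le {h k m : ℕ} (hk : 2 ≤ k) (hc : Nat.gcd h k = 1) (hm : m < k) :
    |(∑ j ∈ Finset.Icc 1 m, -Real.log (|2 * Real.sin (π * j * h / k)|))
      - ∑ b ∈ Finset.Icc 1 (k - 1), 1 / (b : ℝ)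
        * ∑ j ∈ Finset.Icc 1 m, Real.cos (j * (2 * π * (b * h % k : ℕ) / k))|
      ≤ 1 + Real.log k := by
  have hswap : ∑ b ∈ Finset.Icc 1 (k - 1), 1 / (b : ℝ)
        * ∑ j ∈ Finset.Icc 1 m, Real.cos (j * (2 * π * (b * h % k : ℕ) / k))
      = ∑ j ∈ Finset.Icc 1 m, ∑ b ∈ Finset.Icc 1 (k - 1),
          Real.cos (b * (2 * π * j * h / k)) / b := by
    rw [Finset.sum_comm]
    refine Finset.sum_congr rfl fun b _ => ?_
    rw [Finset.mul_sum]
    refine Finset.sum_congr rfl fun j _ => ?_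
    rw [← cos_mod j (b * h) k (by omega),
      show (j : ℝ) * (2 * π * (b * h : ℕ) / k) = b * (2 * π * j * h / k) by push_cast; ring]
    ring
  rw [hswap, ← Finset.sum_sub_distrib]
  refine (Finset.abs_sum_le_sum_abs _ _).trans ?_
  have hsub : Finset.Icc 1 m ⊆ Finset.Icc 1 (k - 1) := Finset.Icc_subset_Icc_right (by omega)
  have hterm : ∀ j ∈ Finset.Icc 1 m,
      |-Real.log (|2 * Real.sin (π * j * h / k)|)
        - ∑ b ∈ Finset.Icc 1 (k - 1), Real.cos (b * (2 * π * j * h / k)) / b|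
      ≤ 1 / (k * |Real.sin (π * (j * h % k : ℕ) / k)|) := by
    intro j hj
    have hγ := Finset.mem_Icc.mp (mul_mod_mem hc (hsub hj))
    have e : 2 * π * j * h / k / 2 = π * j * h / k := by ring
    have es : |Real.sin (π * j * h / k)| = |Real.sin (π * (j * h % k : ℕ) / k)| := by
      rw [← abs_sin_mod _ _ (by omega)]
      push_cast
      rw [mul_assoc]
    have hs : Real.sin (2 * π * j * h / k / 2) ≠ 0 := by
      rw [e, ← abs_pos, es, abs_pos]
      have hk0 : (0 : ℝ) < k := by exact_mod_cast (by omega : 0 < k)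
      have hg : (0 : ℝ) < (j * h % k : ℕ) := by exact_mod_cast hγ.1
      have hgk : ((j * h % k : ℕ) : ℝ) < k := by exact_mod_cast (by omega : j * h % k < k)
      refine (Real.sin_pos_of_pos_of_lt_pi (by positivity) ?_).ne'
      rw [div_lt_iff₀ hk0]
      exact mul_lt_mul_of_pos_left hgk Real.pi_pos
    have := abs_neg_log_sub_sum_cos_le k (by omega) _ hs
    rwa [e, es] at this
  refine (Finset.sum_le_sum hterm).trans ?_
  refine (Finset.sum_le_sum_of_subset_of_nonneg hsub fun _ _ _ => by positivity).trans ?_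
  rw [sum_mul_mod hc (fun r => 1 / (k * |Real.sin (π * r / k)|))]
  refine (Finset.sum_le_sum fun r hr => one_div_mul_sin_le k r (Finset.mem_Icc.mp hr).1
    (by have := (Finset.mem_Icc.mp hr).2; omega)).trans ?_
  have hrefl : ∑ r ∈ Finset.Icc 1 (k - 1), 1 / ((k - r : ℕ) : ℝ)
      = ∑ r ∈ Finset.Icc 1 (k - 1), 1 / (r : ℝ) := by
    refine Finset.sum_nbij' (fun r => k - r) (fun r => k - r) ?_ ?_ ?_ ?_ (fun _ _ => rfl) <;>
    · intro r hr
      simp only [Finset.mem_Icc] at *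
      omega
  rw [← Finset.sum_div, Finset.sum_add_distrib, hrefl]
  linarith [sum_inv_le k hk]

theorem stmt8 : ∃ C : ℝ, 0 < C ∧ ∀ h k m : ℕ, 1 ≤ h → h < k → Nat.gcd h k = 1 → m < k →
    |(∑ j ∈ Finset.Icc 1 m, -Real.log (|2 * Real.sin (π * j * h / k)|))
        - (k : ℝ) / (2 * π) * S m h k|
      ≤ C * (Real.log k) ^ 2 := by
  refine ⟨18, by norm_num, fun h k m h1 hk hc hm => ?_⟩
  have hk2 : 2 ≤ k := by omega
  have hA := abs_sum_log_sub_le hk2 hc hm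
  have hB := abs_sum_sub_le m hk2 hc
  have hlog : 1 / 2 ≤ Real.log k := by
    have : Real.log 2 ≤ Real.log k := Real.log_le_log two_pos (by exact_mod_cast hk2)
    linarith [Real.log_two_gt_d9]
  refine (abs_sub_le _ _ _).trans ((add_le_add hA hB).trans ?_)
  -- `1 ≤ 2 log k` turns `3 (1 + log k)` into a multiple of `(log k)²`
  nlinarith
end

section
/- For every integer L ≥ 1 and every x ∈ ℝ with x ∉ ℤ: | -log|2 sin(πx)| − Σ_{n=1}^L cos(2πnx)/n | ≤ 1/(L·‖x‖). -/
/-!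
With `z = exp(2πix)`, one has `|2 sin(πx)| = ‖1 - z‖`, and `-log ‖1 - w‖` is the real part of
`-log(1 - w) = ∑ wⁿ/n` for `‖w‖ < 1`. Summation by parts bounds `(1 - w)` times any block of this
series starting at `n = m` by `2/m`, uniformly in `‖w‖ ≤ 1` (`norm_one_sub_mul_block_le`). The
resulting bound on the tail for `‖w‖ < 1` passes to `w = z` along the radius `w = rz`, `r → 1⁻`
(`abs_log_tail_le`). The result then follows from `|sin(πx)| ≥ 2‖x‖`, which is Jordan's inequality.
-/

open scoped Real

/-- Summation by parts, with the boundary term `z ^ (m + k) / (m + k)` moved to the left so that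
the estimate is provable by induction on `k`. -/
lemma norm_one_sub_mul_block_add_le {z : ℂ} (hz : ‖z‖ ≤ 1) {m : ℕ} (hm : 1 ≤ m) (k : ℕ) :
    ‖(1 - z) * (∑ n ∈ Finset.range (m + k), z ^ n / n - ∑ n ∈ Finset.range m, z ^ n / n)
      + z ^ (m + k) / (m + k : ℕ)‖ ≤ 2 / m - 1 / (m + k : ℕ) := by
  have hm' : (1 : ℝ) ≤ m := by exact_mod_cast hm
  induction k with
  | zero =>
    simp only [add_zero, sub_self, mul_zero, zero_add, norm_div, norm_pow, Complex.norm_natCast]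
    rw [← sub_div]
    gcongr
    linarith [pow_le_one₀ (n := m) (norm_nonneg z) hz]
  | succ k ih =>
    have hp : (0 : ℝ) < (m + k : ℕ) := by exact_mod_cast (by omega : 0 < m + k)
    have hc : ((m + k : ℕ) : ℂ) ≠ 0 := by exact_mod_cast (by omega : m + k ≠ 0)
    have hc' : ((m + k : ℕ) : ℂ) + 1 ≠ 0 := by exact_mod_cast (by omega : m + k + 1 ≠ 0)
    rw [← add_assoc m k 1, Finset.sum_range_succ]
    generalize m + k = p at *
    push_cast
    have e : (1 - z) * (∑ n ∈ Finset.range p, z ^ n / n + z ^ p / p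
          - ∑ n ∈ Finset.range m, z ^ n / n) + z ^ (p + 1) / (p + 1)
        = ((1 - z) * (∑ n ∈ Finset.range p, z ^ n / n - ∑ n ∈ Finset.range m, z ^ n / n)
          + z ^ p / p) + -(z ^ (p + 1) * ((1 / (p * (p + 1)) : ℝ) : ℂ)) := by
      push_cast
      field_simp
      ring
    have h2 : ‖-(z ^ (p + 1) * ((1 / (p * (p + 1)) : ℝ) : ℂ))‖ ≤ 1 / (p * (p + 1) : ℝ) := by
      rw [norm_neg, norm_mul, norm_pow, Complex.norm_real, Real.norm_of_nonneg (by positivity)]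
      exact mul_le_of_le_one_left (by positivity) (pow_le_one₀ (norm_nonneg z) hz)
    have h3 : 1 / (p * (p + 1) : ℝ) = 1 / p - 1 / (p + 1) := by
      field_simp
      ring
    rw [e]
    linarith [norm_add_le ((1 - z) * (∑ n ∈ Finset.range p, z ^ n / n
      - ∑ n ∈ Finset.range m, z ^ n / n) + z ^ p / p)
      (-(z ^ (p + 1) * ((1 / (p * (p + 1)) : ℝ) : ℂ)))]

lemma norm_one_sub_mul_block_le {z : ℂ} (hz : ‖z‖ ≤ 1) {m : ℕ} (hm : 1 ≤ m) (k : ℕ) :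
    ‖(1 - z) * (∑ n ∈ Finset.range (m + k), z ^ n / n - ∑ n ∈ Finset.range m, z ^ n / n)‖
      ≤ 2 / m := by
  have h1 := norm_one_sub_mul_block_add_le hz hm k
  have h2 : ‖z ^ (m + k) / ((m + k : ℕ) : ℂ)‖ ≤ 1 / (m + k : ℕ) := by
    rw [norm_div, norm_pow, Complex.norm_natCast]
    gcongr
    exact pow_le_one₀ (norm_nonneg z) hz
  have h3 := norm_le_add_norm_add
    ((1 - z) * (∑ n ∈ Finset.range (m + k), z ^ n / n - ∑ n ∈ Finset.range m, z ^ n / n))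
    (z ^ (m + k) / ((m + k : ℕ) : ℂ))
  linarith

lemma abs_log_tail_le_of_norm_lt {z : ℂ} (hz : ‖z‖ < 1) {m : ℕ} (hm : 1 ≤ m) :
    ‖1 - z‖ * |-Real.log ‖1 - z‖ - (∑ n ∈ Finset.range m, z ^ n / n).re| ≤ 2 / m := by
  have hs := (Complex.hasSum_taylorSeries_neg_log hz).tendsto_sum_nat
  have hs' := hs.comp (Filter.tendsto_add_atTop_nat m)
  have hl := ((hs'.sub_const (∑ n ∈ Finset.range m, z ^ n / n)).const_mul (1 - z)).norm
  have hb := le_of_tendsto hl (Filter.Eventually.of_forall fun k => by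
    have := norm_one_sub_mul_block_le hz.le hm k
    rwa [add_comm m k] at this)
  rw [norm_mul] at hb
  refine le_trans (mul_le_mul_of_nonneg_left ?_ (norm_nonneg _)) hb
  have := Complex.abs_re_le_norm (-Complex.log (1 - z) - ∑ n ∈ Finset.range m, z ^ n / n)
  rwa [Complex.sub_re, Complex.neg_re, Complex.log_re] at this

/-- The tail estimate on the closed unit disc away from the singularity, obtained from the open
disc by a radial limit. -/
lemma abs_log_tail_le {z : ℂ} (hz : ‖z‖ ≤ 1) (hz1 : z ≠ 1) {m : ℕ} (hm : 1 ≤ m) :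
    ‖1 - z‖ * |-Real.log ‖1 - z‖ - (∑ n ∈ Finset.range m, z ^ n / n).re| ≤ 2 / m := by
  let F : ℝ → ℝ := fun r => ‖1 - r * z‖ *
    |-Real.log ‖1 - r * z‖ - (∑ n ∈ Finset.range m, (r * z) ^ n / n).re|
  have hF : ContinuousAt F 1 := by
    have h0 : ‖1 - ((1 : ℝ) : ℂ) * z‖ ≠ 0 := by
      simpa [sub_eq_zero] using hz1.symm
    have h1 : ContinuousAt (fun r : ℝ => ‖1 - r * z‖) 1 := by fun_prop
    have h2 : Continuous (fun r : ℝ => (∑ n ∈ Finset.range m, (r * z) ^ n / n).re) := by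
      fun_prop
    exact h1.mul (((h1.log h0).neg.sub h2.continuousAt).abs)
  have hlim : Filter.Tendsto F (nhdsWithin 1 (Set.Iio 1)) (nhds (F 1)) :=
    hF.tendsto.mono_left nhdsWithin_le_nhds
  have hle : F 1 ≤ 2 / m := by
    refine le_of_tendsto hlim ?_
    filter_upwards [Ioo_mem_nhdsLT (zero_lt_one (α := ℝ))] with r hr
    refine abs_log_tail_le_of_norm_lt ?_ hm
    rw [norm_mul, Complex.norm_real, Real.norm_of_nonneg hr.1.le]
    exact lt_of_le_of_lt (mul_le_of_le_one_right hr.1.le hz) hr.2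
  simpa [F] using hle

/-- Jordan's inequality, extended to all of `ℝ` by periodicity. -/
lemma two_mul_abs_sub_round_le (x : ℝ) : 2 * |x - round x| ≤ |Real.sin (π * x)| := by
  have h1 : |Real.sin (π * x)| = |Real.sin (π * (x - round x))| := by
    rw [mul_sub, mul_comm π (round x : ℝ), Real.sin_sub_int_mul_pi, abs_mul, abs_zpow]
    simp
  have h2 := abs_sub_round x
  rw [h1]
  have h3 := Real.mul_abs_le_abs_sin (x := π * (x - round x)) (by
    rw [abs_mul, abs_of_pos Real.pi_pos]
    nlinarith [Real.pi_pos])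
  rw [abs_mul, abs_of_pos Real.pi_pos] at h3
  have hpi := Real.pi_pos.ne'
  calc 2 * |x - round x| = 2 / π * (π * |x - round x|) := by field_simp
    _ ≤ _ := h3

theorem stmt9 (L : ℕ) (hL : 1 ≤ L) (x : ℝ) (hx : ∀ n : ℤ, x ≠ n) :
    |(-Real.log (|2 * Real.sin (π * x)|))
        - ∑ n ∈ Finset.Icc 1 L, Real.cos (2 * π * n * x) / n|
      ≤ 1 / (L * |x - round x|) := by
  have hd : 0 < |x - round x| := abs_pos.2 (sub_ne_zero.2 (hx _))
  have hL' : (1 : ℝ) ≤ L := by exact_mod_cast hL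
  set z : ℂ := Complex.exp (Complex.I * (2 * π * x : ℝ)) with hzdef
  have hz : ‖z‖ = 1 := by rw [hzdef, mul_comm]; exact Complex.norm_exp_ofReal_mul_I _
  have hn : ‖1 - z‖ = |2 * Real.sin (π * x)| := by
    rw [norm_sub_rev, hzdef, Complex.norm_exp_I_mul_ofReal_sub_one, Real.norm_eq_abs]
    congr 3
    ring
  have hsin := two_mul_abs_sub_round_le x
  have hlow : 4 * |x - round x| ≤ ‖1 - z‖ := by
    rw [hn, abs_mul, abs_two]
    linarith
  have hz1 : z ≠ 1 := by
    intro h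
    rw [h, sub_self, norm_zero] at hlow
    linarith
  have hsum : (∑ n ∈ Finset.range (L + 1), z ^ n / n).re
      = ∑ n ∈ Finset.Icc 1 L, Real.cos (2 * π * n * x) / n := by
    -- The `n = 0` term of the left-hand sum is `1 / 0 = 0`.
    rw [Finset.range_eq_Ico, Finset.sum_eq_sum_Ico_succ_bot (by omega), Complex.add_re,
      Complex.re_sum]
    simp only [Nat.cast_zero, div_zero, Complex.zero_re, zero_add]
    refine Finset.sum_congr (by ext; simp) fun n _ => ?_
    rw [Complex.div_natCast_re, hzdef, ← Complex.exp_nat_mul]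
    congr 1
    rw [show (n : ℂ) * (Complex.I * (2 * π * x : ℝ)) = ((2 * π * n * x : ℝ) : ℂ) * Complex.I by
      push_cast; ring]
    exact Complex.exp_ofReal_mul_I_re _
  have key := abs_log_tail_le hz.le hz1 (m := L + 1) (by omega)
  rw [hsum, hn] at key
  rw [hn] at hlow
  set A := |(-Real.log (|2 * Real.sin (π * x)|))
        - ∑ n ∈ Finset.Icc 1 L, Real.cos (2 * π * n * x) / n|
  have hA : 0 ≤ A := abs_nonneg _
  have h1 : 4 * |x - round x| * A ≤ 2 / L := by
    refine (mul_le_mul_of_nonneg_right hlow hA).trans (key.trans ?_)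
    push_cast
    gcongr
    linarith
  rw [le_div_iff₀ (by positivity)]
  rw [le_div_iff₀ (by positivity)] at h1
  linarith
end
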